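/- If G is a finite Q-group with gcd(|G|, 6) = 1, then G is metabelian and G/F(G) is cyclic, where F(G) is the Fitting subgroup of G. -/

import Mathlib

namespace QG

open Subgroup

/-- In the class: finite `p`-groups with at most `p ^ 2` solutions of `x ^ p = 1`. -/
def QC (p : ℕ) (S : Type*) [Group S] : Prop :=
  IsPGroup p S ∧ Nat.card {x : S // x ^ p = 1} ≤ p ^ 2

/-- Hall-type collection formula. -/
lemma hall_formula {S : Type*} [Group S] {x u c d f : S}
    (hux : u * x = x * u * c) (hcx : c * x = x * c * d) (hcu : c * u = u * c * f)
    (hd : ∀ g, d * g = g * d) (hf : ∀ g, f * g = g * f) (n : ℕ) :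
    (x * u) ^ n = x ^ n * u ^ n * c ^ (n.choose 2) * d ^ (n.choose 3) *
      f ^ (∑ i ∈ Finset.range n, i ^ 2) := by
  have hdn : ∀ (k : ℕ) (g : S), d ^ k * g = g * d ^ k := fun k g =>
    ((show Commute d g from hd g).pow_left k)
  have hfn : ∀ (k : ℕ) (g : S), f ^ k * g = g * f ^ k := fun k g =>
    ((show Commute f g from hf g).pow_left k)
  have hcnx : ∀ n : ℕ, c ^ n * x = x * c ^ n * d ^ n := by
    intro n
    induction n with
    | zero => simp
    | succ n ih =>
      calc c ^ (n+1) * x = c ^ n * (c * x) := by rw [pow_succ]; group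
        _ = (c ^ n * x) * c * d := by rw [hcx]; group
        _ = x * c ^ n * (d ^ n * c) * d := by rw [ih]; group
        _ = x * c ^ (n+1) * d ^ (n+1) := by rw [hdn, pow_succ, pow_succ]; group
  have hcnu : ∀ n : ℕ, c ^ n * u = u * c ^ n * f ^ n := by
    intro n
    induction n with
    | zero => simp
    | succ n ih =>
      calc c ^ (n+1) * u = c ^ n * (c * u) := by rw [pow_succ]; group
        _ = (c ^ n * u) * c * f := by rw [hcu]; group
        _ = u * c ^ n * (f ^ n * c) * f := by rw [ih]; group
        _ = u * c ^ (n+1) * f ^ (n+1) := by rw [hfn, pow_succ, pow_succ]; group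
  have hunx : ∀ n : ℕ, u ^ n * x = x * u ^ n * c ^ n * f ^ (n.choose 2) := by
    intro n
    induction n with
    | zero => simp
    | succ n ih =>
      calc u ^ (n+1) * x = u ^ n * (u * x) := by rw [pow_succ]; group
        _ = (u ^ n * x) * u * c := by rw [hux]; group
        _ = x * u ^ n * c ^ n * (f ^ (n.choose 2) * u) * c := by rw [ih]; group
        _ = x * u ^ n * (c ^ n * u) * (f ^ (n.choose 2) * c) := by rw [hfn]; group
        _ = x * u ^ n * u * c ^ n * (f ^ n * c) * f ^ (n.choose 2) := by
            rw [hcnu, hfn (n.choose 2) c]; group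
        _ = x * u ^ (n+1) * c ^ (n+1) * f ^ ((n+1).choose 2) := by
            rw [hfn, Nat.choose_succ_succ' n 1, Nat.choose_one_right, pow_add, pow_succ, pow_succ]
            group
  induction n with
  | zero => simp
  | succ n ih =>
    set a := n.choose 2 with ha
    set b := n.choose 3 with hb
    set g := ∑ i ∈ Finset.range n, i ^ 2 with hg
    have e1 : (n+1).choose 2 = n + a := by
      rw [Nat.choose_succ_succ' n 1, Nat.choose_one_right]
    have e2 : (n+1).choose 3 = a + b := by rw [Nat.choose_succ_succ' n 2]
    have e3 : ∑ i ∈ Finset.range (n+1), i ^ 2 = a + (n + a) + g := by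
      rw [Finset.sum_range_succ, ← hg]
      have : n ^ 2 = 2 * a + n := by
        have h2 := Nat.triangle_succ n
        have h3 : n.choose 2 * 2 = n * (n-1) := by
          rw [Nat.choose_two_right]
          exact Nat.div_mul_cancel (Nat.even_mul_pred_self n).two_dvd
        rw [← ha] at h3
        rcases n with _ | n
        · simp at h3 ⊢; omega
        · simp at h3; nlinarith
      omega
    rw [e1, e2, e3]
    calc (x * u) ^ (n+1) = x ^ n * u ^ n * c ^ a * d ^ b * (f ^ g * (x * u)) := by
          rw [pow_succ, ih]; group
      _ = x ^ n * u ^ n * (c ^ a * x) * u * d ^ b * f ^ g := by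
          rw [hfn g, ← mul_assoc (x ^ n * u ^ n * c ^ a * d ^ b),
            mul_assoc _ (d ^ b) (x * u), hdn]; group
      _ = x ^ n * (u ^ n * x) * c ^ a * (d ^ a * u) * d ^ b * f ^ g := by rw [hcnx]; group
      _ = x ^ n * x * u ^ n * c ^ n * (f ^ a * (c ^ a * u)) * d ^ a * d ^ b * f ^ g := by
          rw [hunx, hdn, ← ha]; group
      _ = x ^ n * x * u ^ n * (c ^ n * u) * c ^ a * f ^ a * (f ^ a * (d ^ a * d ^ b)) * f ^ g := by
          rw [hcnu, hfn a]; group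
      _ = x ^ n * x * u ^ n * u * c ^ n * (f ^ n * c ^ a) * f ^ a * (f ^ a * (d ^ a * d ^ b)) * f ^ g
          := by rw [hcnu]; group
      _ = x ^ n * x * u ^ n * u * c ^ n * c ^ a * ((f ^ n * f ^ a * f ^ a) * (d ^ a * d ^ b)) * f ^ g
          := by rw [hfn]; group
      _ = x ^ n * x * u ^ n * u * c ^ n * c ^ a * ((d ^ a * d ^ b) * (f ^ n * f ^ a * f ^ a)) * f ^ g
          := by rw [← pow_add, ← pow_add, ← pow_add, hfn]
      _ = _ := by
          rw [pow_succ, pow_succ]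
          simp only [pow_add]
          have : f ^ n * f ^ a = f ^ a * f ^ n := by rw [← pow_add, ← pow_add, add_comm]
          simp only [← mul_assoc]
          rw [mul_assoc _ (f ^ n) (f ^ a), this]; group

lemma sum_sq_dvd {p : ℕ} (hp : p.Prime) (h5 : 5 ≤ p) : p ∣ ∑ i ∈ Finset.range p, i ^ 2 := by
  have key : ∀ n : ℕ, 6 * ∑ i ∈ Finset.range (n+1), i ^ 2 = n * (n+1) * (2*n+1) := by
    intro n
    induction n with
    | zero => simp
    | succ n ih => rw [Finset.sum_range_succ, mul_add, ih]; ring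
  have h6 : Nat.Coprime p 6 := by
    rw [Nat.coprime_comm, show 6 = 2 * 3 by norm_num]
    exact Nat.Coprime.mul_left ((Nat.coprime_primes Nat.prime_two hp).2 (by omega))
      ((Nat.coprime_primes Nat.prime_three hp).2 (by omega))
  apply h6.dvd_of_dvd_mul_left
  obtain ⟨m, rfl⟩ : ∃ m, p = m + 1 := ⟨p - 1, by omega⟩
  rw [key]
  exact Dvd.intro_left (m * (2*m+1)) (by ring)

/-- the `p`-th power of a product, in the special situation needed. -/
lemma hall_pow {S : Type*} [Group S] {p : ℕ} (hp : p.Prime) (h5 : 5 ≤ p) {x u c d f : S}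
    (hux : u * x = x * u * c) (hcx : c * x = x * c * d) (hcu : c * u = u * c * f)
    (hd : ∀ g, d * g = g * d) (hf : ∀ g, f * g = g * f) (hc1 : c ^ p = 1) (hd1 : d ^ p = 1)
    (hf1 : f ^ p = 1) : (x * u) ^ p = x ^ p * u ^ p := by
  rw [hall_formula hux hcx hcu hd hf]
  obtain ⟨a, ha⟩ := hp.dvd_choose_self (k := 2) (by norm_num) (by omega)
  obtain ⟨b, hb⟩ := hp.dvd_choose_self (k := 3) (by norm_num) (by omega)
  obtain ⟨e, he⟩ := sum_sq_dvd hp h5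
  rw [ha, hb, he, pow_mul, pow_mul, pow_mul, hc1, hd1, hf1]
  simp

end QG

namespace QG

open Subgroup
open scoped commutatorElement

lemma comm_of_card_le {p : ℕ} [Fact p.Prime] {S : Type*} [Group S] [Finite S] (hS : IsPGroup p S)
    (h : Nat.card S ≤ p ^ 2) : ∀ a b : S, a * b = b * a := by
  obtain ⟨n, hn⟩ := IsPGroup.iff_card.1 hS
  have hp := (Fact.out : p.Prime)
  have hn2 : n ≤ 2 := by
    rw [hn] at h
    exact (Nat.pow_le_pow_iff_right hp.one_lt).1 h
  interval_cases n
  · rw [pow_zero] at hn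
    have := (Nat.card_eq_one_iff_unique.1 hn).1
    intro a b; exact Subsingleton.elim _ _
  · rw [pow_one] at hn
    have := isCyclic_of_prime_card hn
    let _ := IsCyclic.commGroup (α := S)
    intro a b; exact mul_comm a b
  · exact IsPGroup.commutative_of_card_eq_prime_sq hn

lemma QC.of_injective {p : ℕ} {S T : Type*} [Group S] [Finite S] [Group T] (h : QC p S)
    (f : T →* S) (hf : Function.Injective f) : QC p T := by
  refine ⟨h.1.of_injective f hf, le_trans ?_ h.2⟩
  refine Nat.card_le_card_of_injective
    (fun x : {x : T // x ^ p = 1} => (⟨f x.1, by rw [← map_pow, x.2, map_one]⟩ : {x : S // x ^ p = 1})) ?_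
  intro a b hab
  have := Subtype.ext_iff.1 hab
  exact Subtype.ext (hf this)

lemma QC.to_subgroup {p : ℕ} {S : Type*} [Group S] [Finite S] (h : QC p S) (H : Subgroup S) :
    QC p H := h.of_injective H.subtype H.subtype_injective

/-- the set of solutions of `x ^ p = 1` is closed under multiplication. -/
lemma QC.exists_omega {p : ℕ} [Fact p.Prime] {S : Type*} [Group S] [Finite S] (h : QC p S) :
    ∃ E : Subgroup S, ∀ x, x ∈ E ↔ x ^ p = 1 := by
  have hp := (Fact.out : p.Prime)
  rcases subsingleton_or_nontrivial S with hs | hs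
  · exact ⟨⊤, fun x => by simp [Subsingleton.elim x 1]⟩
  have := h.1.center_nontrivial
  have hpc : p ∣ Nat.card (center S) :=
    ((h.1.to_subgroup (center S)).card_eq_or_dvd).resolve_left (by
      have := Finite.one_lt_card (α := center S); omega)
  obtain ⟨z, hz⟩ := exists_prime_orderOf_dvd_card' p hpc
  by_cases hall : ∀ x : S, x ^ p = 1 → x ∈ zpowers (z : S)
  · refine ⟨zpowers (z : S), fun x => ⟨fun hx => ?_, hall x⟩⟩
    obtain ⟨k, rfl⟩ := hx
    have : (z : S) ^ p = 1 := by rw [← hz]; exact_mod_cast congrArg Subtype.val (pow_orderOf_eq_one z)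
    simp only
    rw [← zpow_natCast, zpow_comm, zpow_natCast, this, one_zpow]
  · push Not at hall
    obtain ⟨x, hx, hxz⟩ := hall
    set H : Subgroup S := zpowers x ⊔ zpowers (z : S) with hH
    have hzp : (z : S) ^ p = 1 := by
      rw [← hz]; exact_mod_cast congrArg Subtype.val (pow_orderOf_eq_one z)
    have hzc : zpowers (z : S) ≤ center S := by
      rw [zpowers_le]; exact z.2
    have hzn : (zpowers (z : S)).Normal :=
      ⟨fun a ha g => by
        rw [mem_center_iff.1 (hzc ha) g]; simpa using ha⟩
    have hHp : ∀ y ∈ H, y ^ p = 1 := by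
      intro y hy
      rw [hH, Subgroup.mem_sup_of_normal_right] at hy
      obtain ⟨a, ha, b, hb, rfl⟩ := hy
      have hc : Commute a b := mem_center_iff.1 (hzc hb) a
      rw [hc.mul_pow]
      obtain ⟨k, rfl⟩ := ha
      obtain ⟨l, rfl⟩ := hb
      simp only
      rw [← zpow_natCast, ← zpow_natCast, zpow_comm, zpow_comm (z : S), zpow_natCast, zpow_natCast,
        hx, hzp, one_zpow, one_zpow, one_mul]
    have hcard : p ^ 2 ≤ Nat.card H := by
      obtain ⟨n, hn⟩ := IsPGroup.iff_card.1 (h.1.to_subgroup H)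
      have h1 : zpowers (z : S) < H := by
        refine lt_of_le_of_ne le_sup_right fun he => hxz ?_
        rw [he]; exact (le_sup_left : _ ≤ H) (mem_zpowers x)
      have h2 : Nat.card (zpowers (z : S)) = p := by
        rw [Nat.card_zpowers, Subgroup.orderOf_coe, hz]
      have h3 : p < Nat.card H := by
        refine lt_of_eq_of_lt h2.symm ?_
        exact Set.ncard_lt_ncard (SetLike.coe_ssubset_coe.2 h1) (Set.toFinite _)
      rw [hn] at h3 ⊢
      refine Nat.pow_le_pow_right hp.pos ?_
      by_contra hlt
      have : p ^ n ≤ p ^ 1 := Nat.pow_le_pow_right hp.pos (by omega)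
      rw [pow_one] at this
      omega
    refine ⟨H, fun y => ⟨hHp y, fun hy => ?_⟩⟩
    have hsub : (H : Set S) ⊆ {x : S | x ^ p = 1} := hHp
    have heq : (H : Set S) = {x : S | x ^ p = 1} := by
      refine Set.eq_of_subset_of_ncard_le hsub ?_ (Set.toFinite _)
      exact le_trans h.2 hcard
    have : y ∈ (H : Set S) := by rw [heq]; exact hy
    exact this

/-- `Ω₁(S)`. -/
noncomputable def Om (p : ℕ) (S : Type*) [Group S] : Subgroup S := closure {x : S | x ^ p = 1}

lemma QC.mem_Om {p : ℕ} [Fact p.Prime] {S : Type*} [Group S] [Finite S] (h : QC p S) (x : S) :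
    x ∈ Om p S ↔ x ^ p = 1 := by
  obtain ⟨E, hE⟩ := h.exists_omega
  have : Om p S = E := by
    unfold Om
    apply le_antisymm
    · rw [closure_le]; intro y hy; exact (hE y).2 hy
    · intro y hy; exact subset_closure ((hE y).1 hy)
  rw [this, hE]

lemma QC.card_Om {p : ℕ} [Fact p.Prime] {S : Type*} [Group S] [Finite S] (h : QC p S) :
    Nat.card (Om p S) ≤ p ^ 2 := by
  refine le_trans (le_of_eq ?_) h.2
  exact Nat.card_congr (Equiv.subtypeEquivRight fun x => h.mem_Om x)

lemma QC.Om_normal {p : ℕ} [Fact p.Prime] {S : Type*} [Group S] [Finite S] (h : QC p S) :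
    (Om p S).Normal := ⟨fun x hx g => by
  rw [h.mem_Om] at hx ⊢
  rw [conj_pow, hx]; group⟩

lemma QC.Om_comm {p : ℕ} [Fact p.Prime] {S : Type*} [Group S] [Finite S] (h : QC p S) 
    {a b : S} (ha : a ∈ Om p S) (hb : b ∈ Om p S) : a * b = b * a := by
  have := comm_of_card_le (h.1.to_subgroup (Om p S)) h.card_Om ⟨a, ha⟩ ⟨b, hb⟩
  exact congrArg Subtype.val this

/-- In a nilpotent group, `[N, G] < N` for a nontrivial normal subgroup. -/
lemma commutator_lt_of_nilp {S : Type*} [Group S] [Group.IsNilpotent S] (N : Subgroup S) [N.Normal]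
    (hN : N ≠ ⊥) : ⁅N, (⊤ : Subgroup S)⁆ < N := by
  refine lt_of_le_of_ne (commutator_le_left N ⊤) fun he => hN ?_
  obtain ⟨n, hn⟩ := (Subgroup.nilpotent_iff_lowerCentralSeries (G := S)).1 inferInstance
  rw [eq_bot_iff, ← hn]
  clear hn
  induction n with
  | zero => exact le_top
  | succ n ih =>
    rw [Subgroup.lowerCentralSeries_succ]
    conv_lhs => rw [← he]
    exact commutator_mono ih le_rfl

lemma comm_comm_eq_bot {p : ℕ} [Fact p.Prime] {S : Type*} [Group S] [Finite S] (hS : IsPGroup p S)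
    (N : Subgroup S) [N.Normal] (hN : Nat.card N ≤ p ^ 2) :
    ⁅⁅N, (⊤ : Subgroup S)⁆, (⊤ : Subgroup S)⁆ = ⊥ := by
  have hp := (Fact.out : p.Prime)
  have := hS.isNilpotent
  by_contra hne
  have h2 : ⁅N, (⊤ : Subgroup S)⁆ ≠ ⊥ := by
    intro h0; rw [h0] at hne; simp at hne
  have h1 : N ≠ ⊥ := by
    intro h0; subst h0; simp at h2
  have l1 := commutator_lt_of_nilp N h1
  have l2 := commutator_lt_of_nilp ⁅N, (⊤ : Subgroup S)⁆ h2
  have key : ∀ A B : Subgroup S, A < B → p * Nat.card A ≤ Nat.card B := by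
    intro A B hAB
    obtain ⟨a, ha⟩ := IsPGroup.iff_card.1 (hS.to_subgroup A)
    obtain ⟨b, hb⟩ := IsPGroup.iff_card.1 (hS.to_subgroup B)
    have h3 : Nat.card A < Nat.card B := 
      Set.ncard_lt_ncard (SetLike.coe_ssubset_coe.2 hAB) (Set.toFinite _)
    rw [ha, hb] at h3 ⊢
    rw [← pow_succ']
    exact Nat.pow_le_pow_right hp.pos ((Nat.pow_lt_pow_iff_right hp.one_lt).1 h3)
  have k1 := key _ _ l1
  have k2 := key _ _ l2
  have k3 := key _ _ (bot_lt_iff_ne_bot.2 hne)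
  rw [Subgroup.card_bot] at k3
  have hp2 := hp.two_le
  have : p * (p * (p * 1)) ≤ p ^ 2 := by
    exact (Nat.mul_le_mul_left p ((Nat.mul_le_mul_left p k3).trans k2)).trans (k1.trans hN)
  have : p ^ 2 * p ≤ p ^ 2 * 1 := by linarith
  have := Nat.le_of_mul_le_mul_left this (by positivity)
  omega

/-- Power formula relative to a small normal subgroup of exponent `p`. -/
lemma pow_mul_of_small {p : ℕ} [Fact p.Prime] (h5 : 5 ≤ p) {S : Type*} [Group S] [Finite S]
    (hS : IsPGroup p S) (N : Subgroup S) [N.Normal] (hN : Nat.card N ≤ p ^ 2)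
    (hexp : ∀ x ∈ N, x ^ p = 1) {x u : S} (hxu : x⁻¹ * u⁻¹ * x * u ∈ N) :
    (x * u) ^ p = x ^ p * u ^ p := by
  have hb := comm_comm_eq_bot hS N hN
  have hp := (Fact.out : p.Prime)
  set c := (x * u)⁻¹ * (u * x) with hc
  have hcN : c ∈ N := by
    have h3 : x⁻¹ * u⁻¹ * x * u = x⁻¹ * u⁻¹ * (x * u) := by group
    have h4 : c = (x * u)⁻¹ * (u * x) := rfl
    have h5 : c⁻¹ = (u * x)⁻¹ * (x * u) := by rw [h4]; group
    rw [← inv_mem_iff, h5]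
    have h6 : (u * x)⁻¹ * (x * u) = x⁻¹ * u⁻¹ * x * u := by group
    rw [h6]; exact hxu
  have hcomm : ∀ g, ∀ a ∈ N, (g * a)⁻¹ * (a * g) ∈ ⁅N, (⊤ : Subgroup S)⁆ := by
    intro g a ha
    have : (g * a)⁻¹ * (a * g) = ⁅a⁻¹, g⁻¹⁆ := by rw [commutatorElement_def]; group
    rw [this]
    exact commutator_mem_commutator (inv_mem ha) (mem_top _)
  have hcen : ∀ d ∈ ⁅N, (⊤ : Subgroup S)⁆, ∀ g, d * g = g * d := by
    intro d hd g
    have : ⁅d, g⁆ ∈ (⊥ : Subgroup S) := by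
      rw [← hb]; exact commutator_mem_commutator hd (mem_top _)
    rw [mem_bot, commutatorElement_eq_one_iff_mul_comm] at this
    exact this
  have hle : ⁅N, (⊤ : Subgroup S)⁆ ≤ N := commutator_le_left N ⊤
  refine hall_pow hp h5 (c := c) (d := (x * c)⁻¹ * (c * x)) (f := (u * c)⁻¹ * (c * u))
    (by rw [hc]; group) (by group) (by group) (hcen _ (hcomm x c hcN)) (hcen _ (hcomm u c hcN))
    (hexp _ hcN) (hexp _ (hle (hcomm x c hcN))) (hexp _ (hle (hcomm u c hcN)))

/-- maximal subgroups of finite p-groups -/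
lemma coatom_pgroup {p : ℕ} [Fact p.Prime] {S : Type*} [Group S] [Finite S] (hS : IsPGroup p S)
    (M : Subgroup S) (hM : IsCoatom M) : M.Normal ∧ ∀ x : S, x ^ p ∈ M := by
  have := hS.isNilpotent
  have hn : M.Normal := Subgroup.NormalizerCondition.normal_of_coatom M
    Group.normalizerCondition_of_isNilpotent hM
  refine ⟨hn, ?_⟩
  by_contra hx
  push Not at hx
  obtain ⟨x, hx⟩ := hx
  -- `M ⊔ ⟨x ^ p⟩ = ⊤`
  have htop : M ⊔ zpowers (x ^ p) = ⊤ := hM.2 _ (lt_of_le_of_ne le_sup_left fun he =>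
    hx (by rw [he]; exact (le_sup_right : _ ≤ M ⊔ zpowers (x^p)) (mem_zpowers _)))
  have hxm : x ∈ M ⊔ zpowers (x ^ p) := by rw [htop]; trivial
  rw [Subgroup.mem_sup_of_normal_left] at hxm
  obtain ⟨a, ha, b, hb, hab⟩ := hxm
  obtain ⟨k, rfl⟩ := hb
  -- pass to the quotient
  have h1 : (QuotientGroup.mk' M x) ^ (1 - p * k : ℤ) = 1 := by
    have : QuotientGroup.mk' M x = (QuotientGroup.mk' M x) ^ (p * k : ℤ) := by
      conv_lhs => rw [← hab, map_mul, (QuotientGroup.eq_one_iff a).2 ha |> fun h => (show QuotientGroup.mk' M a = 1 from h)]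
      simp only [one_mul, map_zpow, map_pow]
      rw [zpow_mul, zpow_natCast]
    rw [zpow_sub, zpow_one, ← this, mul_inv_cancel]
  obtain ⟨n, hn'⟩ := hS x
  have h2 : (QuotientGroup.mk' M x) ^ (p ^ n) = 1 := by rw [← map_pow, hn', map_one]
  have h3 : IsCoprime (1 - p * k : ℤ) ((p ^ n : ℕ) : ℤ) := by
    push_cast
    apply IsCoprime.pow_right
    exact ⟨1, k, by ring⟩
  obtain ⟨u, v, huv⟩ := h3
  have h4 : QuotientGroup.mk' M x = 1 := by
    rw [← zpow_one (QuotientGroup.mk' M x), ← huv, zpow_add, mul_comm u, mul_comm v, zpow_mul,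
      zpow_mul, h1, zpow_natCast, h2]; simp
  have h5 : x ∈ M := (QuotientGroup.eq_one_iff x).1 h4
  exact hx (pow_mem h5 p)

/-- subgroup generated by `p`-th powers. -/
noncomputable def Pw (p : ℕ) (S : Type*) [Group S] : Subgroup S :=
  closure (Set.range fun x : S => x ^ p)

lemma pow_mem_Pw (p : ℕ) {S : Type*} [Group S] (x : S) : x ^ p ∈ Pw p S :=
  subset_closure ⟨x, rfl⟩

instance Pw_char (p : ℕ) (S : Type*) [Group S] : (Pw p S).Characteristic := by
  rw [characteristic_iff_map_le]
  intro φ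
  unfold Pw
  rw [MonoidHom.map_closure, closure_le]
  rintro _ ⟨_, ⟨x, rfl⟩, rfl⟩
  exact subset_closure ⟨φ x, by simp⟩

lemma Pw_nongen {p : ℕ} [Fact p.Prime] {S : Type*} [Group S] [Finite S] (hS : IsPGroup p S)
    (K : Subgroup S) (hK : K ⊔ Pw p S = ⊤) : K = ⊤ := by
  by_contra hne
  obtain ⟨M, hM, hKM⟩ := (eq_top_or_exists_le_coatom K).resolve_left hne
  apply hM.1
  rw [eq_top_iff, ← hK, sup_le_iff]
  refine ⟨hKM, ?_⟩
  unfold Pw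
  rw [closure_le]
  rintro _ ⟨x, rfl⟩
  exact (coatom_pgroup hS M hM).2 x

end QG

namespace QG

open Subgroup
universe u
open scoped commutatorElement

lemma card_lt_of_lt {p : ℕ} [Fact p.Prime] {S : Type*} [Group S] [Finite S] (hS : IsPGroup p S)
    {A B : Subgroup S} (hAB : A < B) : p * Nat.card A ≤ Nat.card B := by
  have hp := (Fact.out : p.Prime)
  obtain ⟨a, ha⟩ := IsPGroup.iff_card.1 (hS.to_subgroup A)
  obtain ⟨b, hb⟩ := IsPGroup.iff_card.1 (hS.to_subgroup B)
  have h3 : Nat.card A < Nat.card B := 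
    Set.ncard_lt_ncard (SetLike.coe_ssubset_coe.2 hAB) (Set.toFinite _)
  rw [ha, hb] at h3 ⊢
  rw [← pow_succ']
  exact Nat.pow_le_pow_right hp.pos ((Nat.pow_lt_pow_iff_right hp.one_lt).1 h3)

lemma QC.pow_eq_aux {p : ℕ} [Fact p.Prime] (h5 : 5 ≤ p) (n : ℕ) :
    ∀ (S : Type u) [Group S] [Finite S], Nat.card S ≤ n → QC p S → ∀ x y : S, x ^ p = y ^ p →
      (x⁻¹ * y) ^ p = 1 := by
  induction n with
  | zero =>
    intro S _ _ hc
    have := Nat.card_pos (α := S)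
    omega
  | succ n ih =>
    intro S _ _ hc h x y hxy
    by_cases htop : zpowers x = ⊤
    · have hy : y ∈ zpowers x := by rw [htop]; trivial
      obtain ⟨k, rfl⟩ := hy
      have hcm : Commute (x⁻¹) (x ^ k) := (Commute.refl x).inv_left.zpow_right k
      simp only at hxy ⊢
      rw [hcm.mul_pow, inv_pow, hxy, inv_mul_cancel]
    · obtain ⟨M, hM, hxM⟩ := (eq_top_or_exists_le_coatom (zpowers x)).resolve_left htop
      have hMn := (coatom_pgroup h.1 M hM).1
      have hxM' : x ∈ M := hxM (mem_zpowers x)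
      have hx2 : y * x * y⁻¹ ∈ M := hMn.conj_mem x hxM' y
      have hcard : Nat.card M ≤ n := by
        have h1 : p * Nat.card M ≤ Nat.card (⊤ : Subgroup S) :=
          card_lt_of_lt h.1 (lt_top_iff_ne_top.2 hM.1)
        rw [Subgroup.card_top] at h1
        have := Nat.card_pos (α := M)
        nlinarith
      have h1 := ih M hcard (h.to_subgroup M) ⟨x, hxM'⟩ ⟨y * x * y⁻¹, hx2⟩ (by
        apply Subtype.ext
        simp only [SubmonoidClass.coe_pow]
        rw [conj_pow, hxy]; group)
      have h2 : (x⁻¹ * (y * x * y⁻¹)) ^ p = 1 := congrArg Subtype.val h1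
      have h3 := (h.mem_Om _).2 h2
      have hOn := h.Om_normal
      have h4 : x⁻¹ * (x⁻¹ * y)⁻¹ * x * (x⁻¹ * y) ∈ Om p S := by
        have h5 := inv_mem (hOn.conj_mem _ h3 y⁻¹)
        have h6 : x⁻¹ * (x⁻¹ * y)⁻¹ * x * (x⁻¹ * y) = (y⁻¹ * (x⁻¹ * (y * x * y⁻¹)) * y⁻¹⁻¹)⁻¹ := by group
        rw [h6]; exact h5
      have h7 := pow_mul_of_small h5 h.1 (Om p S) h.card_Om (fun x hx => (h.mem_Om x).1 hx) h4
      rw [mul_inv_cancel_left, ← hxy] at h7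
      exact (mul_eq_left.1 h7.symm)

lemma QC.pow_eq {p : ℕ} [Fact p.Prime] (h5 : 5 ≤ p) {S : Type*} [Group S] [Finite S] (h : QC p S)
    {x y : S} (hxy : x ^ p = y ^ p) : (x⁻¹ * y) ^ p = 1 :=
  QC.pow_eq_aux h5 _ S le_rfl h x y hxy

lemma QC.card_le {p : ℕ} [Fact p.Prime] (h5 : 5 ≤ p) {S : Type*} [Group S] [Finite S] (h : QC p S)
    (N : Subgroup S) (hN : ∀ x : S, x ^ p ∈ N) : Nat.card S ≤ Nat.card N * Nat.card (Om p S) := by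
  rw [Subgroup.card_eq_card_quotient_mul_card_subgroup (Om p S)]
  refine Nat.mul_le_mul_right _ ?_
  refine Nat.card_le_card_of_injective (fun q : S ⧸ Om p S => (⟨q.out ^ p, hN _⟩ : N)) ?_
  intro a b hab
  have h1 := h.pow_eq h5 (Subtype.ext_iff.1 hab)
  rw [← h.mem_Om, ← QuotientGroup.eq] at h1
  simpa using h1

lemma QC.index_le {p : ℕ} [Fact p.Prime] (h5 : 5 ≤ p) {S : Type*} [Group S] [Finite S] (h : QC p S) :
    (Pw p S).index ≤ p ^ 2 := by
  have h1 := h.card_le h5 (Pw p S) (pow_mem_Pw p)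
  rw [← (Pw p S).card_mul_index] at h1
  exact (Nat.le_of_mul_le_mul_left h1 Nat.card_pos).trans h.card_Om

lemma QC.commutator_le {p : ℕ} [Fact p.Prime] (h5 : 5 ≤ p) {S : Type*} [Group S] [Finite S]
    (h : QC p S) : commutator S ≤ Pw p S := by
  have h1 := comm_of_card_le (h.1.to_quotient (Pw p S)) (h.index_le h5)
  rw [commutator_eq_closure, closure_le]
  rintro _ ⟨a, b, rfl⟩
  have : (QuotientGroup.mk' (Pw p S)) ⁅a, b⁆ = 1 := by
    rw [map_commutatorElement, commutatorElement_eq_one_iff_mul_comm]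
    exact h1 _ _
  exact (QuotientGroup.eq_one_iff _).1 this

lemma QC.cyclic {p : ℕ} [Fact p.Prime] (h5 : 5 ≤ p) {S : Type*} [Group S] [Finite S]
    (h : QC p S) (ho : Nat.card (Om p S) < p ^ 2) : IsCyclic S := by
  have h1 := h.card_le h5 (Pw p S) (pow_mem_Pw p)
  have hpos := Nat.card_pos (α := Pw p S)
  suffices hs : ∃ x : S, zpowers x ⊔ Pw p S = ⊤ by
    obtain ⟨x, hx⟩ := hs
    exact isCyclic_iff_exists_zpowers_eq_top.2 ⟨x, Pw_nongen h.1 _ hx⟩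
  by_cases ht : Pw p S = ⊤
  · exact ⟨1, by rw [ht]; simp⟩
  obtain ⟨x, hx⟩ := SetLike.exists_not_mem_of_ne_top _ ht rfl
  refine ⟨x, ?_⟩
  by_contra hne
  have l1 : Pw p S < zpowers x ⊔ Pw p S := lt_of_le_of_ne le_sup_right fun he =>
    hx (by rw [he]; exact (le_sup_left : _ ≤ zpowers x ⊔ Pw p S) (mem_zpowers x))
  have l2 := lt_top_iff_ne_top.2 hne
  have k1 := card_lt_of_lt h.1 l1
  have k2 := card_lt_of_lt h.1 l2
  rw [Subgroup.card_top] at k2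
  have k3 := Nat.mul_le_mul_left p k1
  have k4 := Nat.mul_lt_mul_of_pos_left ho hpos
  nlinarith

lemma QC.two_gen {p : ℕ} [Fact p.Prime] (h5 : 5 ≤ p) {S : Type*} [Group S] [Finite S]
    (h : QC p S) : ∃ x y : S, closure {x, y} = ⊤ := by
  have h1 := h.card_le h5 (Pw p S) (pow_mem_Pw p)
  have hpos := Nat.card_pos (α := Pw p S)
  suffices hs : ∃ x y : S, zpowers y ⊔ (zpowers x ⊔ Pw p S) = ⊤ by
    obtain ⟨x, y, hx⟩ := hs
    refine ⟨x, y, Pw_nongen h.1 _ ?_⟩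
    rw [eq_top_iff, ← hx, ← sup_assoc]
    refine sup_le_sup_right (sup_le ?_ ?_) _
    · rw [zpowers_le]; exact subset_closure (by simp)
    · rw [zpowers_le]; exact subset_closure (by simp)
  by_cases ht : Pw p S = ⊤
  · exact ⟨1, 1, by rw [ht]; simp⟩
  obtain ⟨x, hx⟩ := SetLike.exists_not_mem_of_ne_top _ ht rfl
  by_cases ht2 : zpowers x ⊔ Pw p S = ⊤
  · exact ⟨x, 1, by rw [ht2]; simp⟩
  obtain ⟨y, hy⟩ := SetLike.exists_not_mem_of_ne_top _ ht2 rfl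
  refine ⟨x, y, ?_⟩
  by_contra hne
  have l1 : Pw p S < zpowers x ⊔ Pw p S := lt_of_le_of_ne le_sup_right fun he =>
    hx (by rw [he]; exact (le_sup_left : _ ≤ zpowers x ⊔ Pw p S) (mem_zpowers x))
  have l2 : zpowers x ⊔ Pw p S < zpowers y ⊔ (zpowers x ⊔ Pw p S) :=
    lt_of_le_of_ne le_sup_right fun he =>
    hy (by rw [he]; exact (le_sup_left : _ ≤ zpowers y ⊔ (zpowers x ⊔ Pw p S)) (mem_zpowers y))
  have l3 := lt_top_iff_ne_top.2 hne
  have k1 := card_lt_of_lt h.1 l1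
  have k2 := card_lt_of_lt h.1 l2
  have k3 := card_lt_of_lt h.1 l3
  rw [Subgroup.card_top] at k3
  have k4 := Nat.mul_le_mul_left p ((Nat.mul_le_mul_left p k1).trans k2)
  have k5 := Nat.mul_le_mul_left (Nat.card (Pw p S)) h.card_Om
  have k6 : p * (p * (p * Nat.card (Pw p S))) ≤ Nat.card (Pw p S) * p ^ 2 :=
    (k4.trans k3).trans (h1.trans k5)
  have k7 : 0 < p * p * Nat.card (Pw p S) := by positivity
  nlinarith

/-- a group generated by two commuting elements is commutative -/
lemma comm_of_two_gen {S : Type*} [Group S] {x y : S} (h : closure {x, y} = ⊤)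
    (hxy : x * y = y * x) (a b : S) : a * b = b * a := by
  have h1 : ∀ g : S, g * x = x * g ∧ g * y = y * g := by
    intro g
    have : (⊤ : Subgroup S) ≤ centralizer {x, y} := by
      rw [← h, closure_le]
      rintro z (rfl | rfl)
      · rintro w (rfl | rfl)
        · rfl
        · exact hxy.symm
      · rintro w (rfl | rfl)
        · exact hxy
        · rfl
    have h2 := mem_centralizer_iff.1 (this (mem_top g))
    exact ⟨(h2 x (by simp)).symm, (h2 y (by simp)).symm⟩
  have : (⊤ : Subgroup S) ≤ centralizer {a} := by
    rw [← h, closure_le]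
    rintro z (rfl | rfl)
    · rintro w rfl; exact (h1 _).1
    · rintro w rfl; exact (h1 _).2
  exact mem_centralizer_iff.1 (this (mem_top b)) a rfl

/-- The derived subgroup is cyclic. -/
lemma QC.commutator_cyclic {p : ℕ} [Fact p.Prime] (h5 : 5 ≤ p) {S : Type*} [Group S] [Finite S]
    (h : QC p S) : IsCyclic (commutator S) := by
  set D := commutator S with hD
  have hDq := h.to_subgroup D
  set R : Subgroup S := (Pw p D).map D.subtype with hR
  have hRn : R.Normal := by rw [hR]; infer_instance
  set f : D →* S ⧸ R := (QuotientGroup.mk' R).comp D.subtype with hf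
  have hker : Pw p D ≤ f.ker := by
    intro d hd
    rw [MonoidHom.mem_ker]
    exact (QuotientGroup.eq_one_iff _).2 (mem_map_of_mem _ hd)
  have hker' : f.ker ≤ Pw p D := by
    intro d hd
    rw [MonoidHom.mem_ker] at hd
    have h1 : (d : S) ∈ R := (QuotientGroup.eq_one_iff _).1 hd
    obtain ⟨d', h2, h3⟩ := h1
    have : d' = d := Subtype.ext h3
    rwa [← this]
  have hrange : f.range = commutator (S ⧸ R) := by
    rw [hf, MonoidHom.range_comp, range_subtype, hD]
    unfold _root_.commutator
    rw [map_commutator, map_top_of_surjective _ (QuotientGroup.mk'_surjective R)]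
  have hQ : IsPGroup p (S ⧸ R) := h.1.to_quotient R
  have hNc : Nat.card (commutator (S ⧸ R)) ≤ p ^ 2 := by
    rw [← hrange, ← Subgroup.index_ker]
    exact (Nat.le_of_dvd (Nat.pos_of_ne_zero index_ne_zero_of_finite)
      (Subgroup.index_dvd_of_le hker)).trans (hDq.index_le h5)
  have hNe : ∀ x ∈ commutator (S ⧸ R), x ^ p = 1 := by
    rw [← hrange]
    rintro _ ⟨d, rfl⟩
    rw [← map_pow]
    exact hker (pow_mem_Pw p d)
  have hpc : ∀ x : S ⧸ R, x ^ p ∈ center (S ⧸ R) := by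
    intro x
    rw [mem_center_iff]
    intro y
    have hcm : ∀ a b : S ⧸ R, a⁻¹ * b⁻¹ * a * b ∈ commutator (S ⧸ R) := by
      intro a b
      have := commutator_mem_commutator (mem_top a⁻¹) (mem_top b⁻¹)
      simpa [_root_.commutator, commutatorElement_def] using this
    have h1 := pow_mul_of_small h5 hQ (commutator (S ⧸ R)) hNc hNe (hcm x (x⁻¹ * y⁻¹ * x * y))
    rw [hNe _ (hcm x y), mul_one] at h1
    have h2 : x * (x⁻¹ * y⁻¹ * x * y) = y⁻¹ * x * y⁻¹⁻¹ := by group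
    rw [h2, conj_pow] at h1
    nth_rw 1 [← h1]
    group
  have hNz : commutator (S ⧸ R) ≤ center (S ⧸ R) := by
    have e1 : commutator (S ⧸ R) = (commutator S).map (QuotientGroup.mk' R) := by
      unfold _root_.commutator
      rw [map_commutator, map_top_of_surjective _ (QuotientGroup.mk'_surjective R)]
    rw [e1]
    refine (map_mono (h.commutator_le h5)).trans ?_
    unfold Pw
    rw [MonoidHom.map_closure, closure_le]
    rintro _ ⟨_, ⟨x, rfl⟩, rfl⟩
    simp only [map_pow]
    exact hpc _
  obtain ⟨x, y, hxy⟩ := h.two_gen h5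
  have hcD : ⁅x, y⁆ ∈ D := commutator_mem_commutator (mem_top x) (mem_top y)
  set c : D := ⟨⁅x, y⁆, hcD⟩ with hc
  have hfc : f c ∈ center (S ⧸ R) := hNz (by rw [← hrange]; exact ⟨c, rfl⟩)
  have hTn : (zpowers (f c)).Normal :=
    ⟨fun a ha g => by
      have : a ∈ center (S ⧸ R) := (zpowers_le.2 hfc) ha
      rw [mem_center_iff.1 this g]; simpa using ha⟩
  have hle : commutator (S ⧸ R) ≤ zpowers (f c) := by
    set π := (QuotientGroup.mk' (zpowers (f c))).comp (QuotientGroup.mk' R) with hπ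
    have hπs : Function.Surjective π := 
      (QuotientGroup.mk'_surjective (zpowers (f c))).comp (QuotientGroup.mk'_surjective R)
    have g1 : closure {π x, π y} = ⊤ := by
      rw [← Set.image_pair, ← MonoidHom.map_closure, hxy, map_top_of_surjective _ hπs]
    have g2 : π x * π y = π y * π x := by
      rw [← commutatorElement_eq_one_iff_mul_comm, ← map_commutatorElement]
      exact (QuotientGroup.eq_one_iff _).2 (mem_zpowers (f c))
    have g3 := comm_of_two_gen g1 g2
    rw [commutator_eq_closure, closure_le]
    rintro _ ⟨a, b, rfl⟩
    have : (QuotientGroup.mk' (zpowers (f c))) ⁅a, b⁆ = 1 := by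
      rw [map_commutatorElement, commutatorElement_eq_one_iff_mul_comm]
      exact g3 _ _
    exact (QuotientGroup.eq_one_iff _).1 this
  have hgen : zpowers c ⊔ Pw p D = ⊤ := by
    rw [eq_top_iff]
    intro d _
    have h1 : f d ∈ zpowers (f c) := hle (by rw [← hrange]; exact ⟨d, rfl⟩)
    obtain ⟨k, hk⟩ := h1
    have h2 : c ^ (-k) * d ∈ Pw p D := hker' (by
      rw [MonoidHom.mem_ker, map_mul, map_zpow, ← hk]; simp)
    have h3 : d = c ^ k * (c ^ (-k) * d) := by group
    rw [h3]
    exact mul_mem_sup (zpow_mem (mem_zpowers c) k) h2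
  exact isCyclic_iff_exists_zpowers_eq_top.2 ⟨c, Pw_nongen hDq.1 _ hgen⟩

/-- Coprime automorphisms trivial on `Ω₁(S)` are trivial. -/
lemma QC.aut_trivial {p : ℕ} [Fact p.Prime] (h5 : 5 ≤ p) {S : Type*} [Group S] [Finite S]
    (h : QC p S) (t : MulAut S) (n : ℕ) (hn : n.Coprime p) (ht : t ^ n = 1)
    (htriv : ∀ e : S, e ^ p = 1 → t e = e) (x : S) : t x = x := by
  obtain ⟨k, hk⟩ := h.1 x
  induction k generalizing x with
  | zero => simp at hk; simp [hk]
  | succ k ih =>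
    have h1 : t (x ^ p) = x ^ p := ih (x ^ p) (by rw [← pow_mul, ← pow_succ', hk])
    rw [map_pow] at h1
    have h2 := h.pow_eq h5 h1.symm
    set e := x⁻¹ * t x with he
    have h3 : t x = x * e := by rw [he]; group
    have h4 : t e = e := htriv e h2
    have h5 : ∀ j : ℕ, (t ^ j) x = x * e ^ j := by
      intro j
      induction j with
      | zero => simp
      | succ j ihj => rw [pow_succ', MulAut.mul_apply, ihj, map_mul, map_pow, h4, h3, mul_assoc, pow_succ']
    have h6 := h5 n
    rw [ht, MulAut.one_apply] at h6
    have h7 : e ^ n = 1 := (mul_eq_left.1 h6.symm)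
    have h8 : e = 1 := by
      have := pow_gcd_eq_one.2 ⟨h7, h2⟩
      rwa [hn, pow_one] at this
    rw [h3, h8, mul_one]

end QG

namespace QG

open Subgroup
open scoped commutatorElement

/-- the `p`-core. -/
noncomputable def Op (p : ℕ) (G : Type*) [Group G] : Subgroup G :=
  ((Classical.choice (Sylow.nonempty (p := p) (G := G)) : Sylow p G) : Subgroup G).normalCore

instance Op_normal (p : ℕ) (G : Type*) [Group G] : (Op p G).Normal := by
  unfold Op; infer_instance

lemma Op_pgroup (p : ℕ) (G : Type*) [Group G] : IsPGroup p (Op p G) :=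
  (Classical.choice (Sylow.nonempty (p := p) (G := G)) : Sylow p G).isPGroup'.to_le
    (normalCore_le _)

lemma Op_le_sylow {p : ℕ} {G : Type*} [Group G] (P : Sylow p G) : Op p G ≤ P := by
  rw [← sup_eq_right]
  exact P.is_maximal' ((Op_pgroup p G).to_sup_of_normal_left P.isPGroup') le_sup_right

lemma le_Op {p : ℕ} {G : Type*} [Group G] (H : Subgroup G) [hn : H.Normal] (hH : IsPGroup p H) :
    H ≤ Op p G := by
  unfold Op
  refine normal_le_normalCore.2 ?_
  set P := (Classical.choice (Sylow.nonempty (p := p) (G := G)) : Sylow p G)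
  rw [← sup_eq_right]
  exact P.is_maximal' (hH.to_sup_of_normal_left P.isPGroup') le_sup_right

lemma Op_commute {p q : ℕ} (hp : p.Prime) (hq : q.Prime) (hpq : p ≠ q) {G : Type*} [Group G]
    {x y : G} (hx : x ∈ Op p G) (hy : y ∈ Op q G) : x * y = y * x := by
  have := Fact.mk hp
  have := Fact.mk hq
  exact commute_of_normal_of_disjoint (Op p G) (Op q G) inferInstance inferInstance
    (IsPGroup.disjoint_of_ne p q hpq _ _ (Op_pgroup p G) (Op_pgroup q G)) x y hx hy

/-- product of the `q`-cores, `q ∈ A` -/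
noncomputable def OO (G : Type*) [Group G] (A : Finset ℕ) : Subgroup G := ⨆ q : A, Op q.1 G

instance OO_normal (G : Type*) [Group G] (A : Finset ℕ) : (OO G A).Normal := by
  unfold OO; infer_instance

lemma Op_le_OO {G : Type*} [Group G] {A : Finset ℕ} {q : ℕ} (hq : q ∈ A) : Op q G ≤ OO G A :=
  le_iSup (fun q : A => Op q.1 G) ⟨q, hq⟩

lemma OO_surj (G : Type*) [Group G] (A : Finset ℕ) (hA : ∀ q ∈ A, q.Prime) :
    ∃ f : (∀ q : A, Op q.1 G) →* OO G A, Function.Surjective f := by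
  have hcomm : Pairwise fun i j : A => ∀ x y : G, x ∈ Op i.1 G → y ∈ Op j.1 G → Commute x y := by
    intro i j hij x y hx hy
    exact Op_commute (hA _ i.2) (hA _ j.2) (fun h => hij (Subtype.ext h)) hx hy
  have hr := Subgroup.noncommPiCoprod_range (hcomm := hcomm)
  refine ⟨(MulEquiv.subgroupCongr hr).toMonoidHom.comp (Subgroup.noncommPiCoprod hcomm).rangeRestrict, ?_⟩
  exact (MulEquiv.subgroupCongr hr).surjective.comp (MonoidHom.rangeRestrict_surjective _)

lemma OO_nilpotent (G : Type*) [Group G] [Finite G] (A : Finset ℕ) (hA : ∀ q ∈ A, q.Prime) :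
    Group.IsNilpotent (OO G A) := by
  obtain ⟨f, hf⟩ := OO_surj G A hA
  have : ∀ q : A, Group.IsNilpotent (Op q.1 G) := fun q => by
    have := Fact.mk (hA _ q.2)
    exact (Op_pgroup q.1 G).isNilpotent
  exact Group.nilpotent_of_surjective f hf

lemma OO_coprime (G : Type*) [Group G] [Finite G] (A : Finset ℕ) (hA : ∀ q ∈ A, q.Prime)
    {p : ℕ} (hp : p.Prime) (hpA : p ∉ A) : (Nat.card (OO G A)).Coprime p := by
  obtain ⟨f, hf⟩ := OO_surj G A hA
  have h1 := Subgroup.card_dvd_of_surjective f hf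
  refine Nat.Coprime.coprime_dvd_left h1 ?_
  rw [Nat.card_pi]
  refine Nat.Coprime.prod_left fun q _ => ?_
  have := Fact.mk (hA _ q.2)
  obtain ⟨n, hn⟩ := IsPGroup.iff_card.1 (Op_pgroup q.1 G)
  rw [hn]
  refine Nat.Coprime.pow_left _ ((Nat.coprime_primes (hA _ q.2) hp).2 ?_)
  rintro h
  exact hpA (h ▸ q.2)

/-- Fitting subgroup -/
noncomputable def Fit (G : Type*) [Group G] : Subgroup G := OO G (Nat.card G).primeFactors

instance Fit_normal (G : Type*) [Group G] : (Fit G).Normal := by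
  unfold Fit; infer_instance

lemma Fit_nilpotent (G : Type*) [Group G] [Finite G] : Group.IsNilpotent (Fit G) :=
  OO_nilpotent G _ fun _ h => Nat.prime_of_mem_primeFactors h

lemma Op_le_Fit (G : Type*) [Group G] [Finite G] {p : ℕ} (hp : p.Prime) : Op p G ≤ Fit G := by
  by_cases h : p ∣ Nat.card G
  · exact Op_le_OO (Nat.mem_primeFactors.2 ⟨hp, h, Nat.card_pos.ne'⟩)
  · have := Fact.mk hp
    have h1 : Op p G = ⊥ := by
      rw [← Subgroup.card_eq_one]
      refine ((Op_pgroup p G).card_eq_or_dvd).resolve_right fun h2 => h ?_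
      exact h2.trans (Subgroup.card_subgroup_dvd_card _)
    rw [h1]; exact bot_le

lemma le_Fit {G : Type*} [Group G] [Finite G] (H : Subgroup G) (hn : H.Normal)
    (hH : Group.IsNilpotent H) : H ≤ Fit G := by
  rw [← Subgroup.subgroupOf_eq_top, ← Subgroup.index_eq_one]
  by_contra hne
  obtain ⟨p, hp, hdvd⟩ := Nat.exists_prime_and_dvd hne
  have := Fact.mk hp
  obtain ⟨P⟩ : Nonempty (Sylow p H) := Sylow.nonempty
  have hPn : (P : Subgroup H).Normal := inferInstance
  have hPc : (P : Subgroup H).Characteristic := P.characteristic_of_normal hPn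
  have h1 : ((P : Subgroup H).map H.subtype).Normal := inferInstance
  have h2 := le_Op _ (P.isPGroup'.map H.subtype)
  have h3 : (P : Subgroup H) ≤ (Fit G).subgroupOf H := by
    intro x hx
    rw [mem_subgroupOf]
    exact Op_le_Fit G hp (h2 (mem_map_of_mem _ hx))
  have h4 := Subgroup.index_dvd_of_le h3
  exact P.not_dvd_index (hdvd.trans h4)

lemma card_preimage_mk {G : Type*} [Group G] (W : Subgroup G) (t : Set (G ⧸ W)) :
    Nat.card ((QuotientGroup.mk : G → G ⧸ W) ⁻¹' t) = Nat.card W * Nat.card t := by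
  rw [Nat.card_congr (QuotientGroup.preimageMkEquivSubgroupProdSet W t), Nat.card_prod]

/-- Step (A). -/
lemma exists_W {G : Type*} [Group G] [Finite G] {q : ℕ} [Fact q.Prime] (h5 : 5 ≤ q)
    (h : ∀ k : ℕ, Nat.card {x : G // x ^ (q ^ k) = 1} ≤ q ^ (2 * k)) :
    ∃ W : Subgroup G, ∃ _ : W.Normal, IsPGroup q W ∧
      ∀ H : Subgroup (G ⧸ W), IsPGroup q H → IsCyclic H := by
  have hq := (Fact.out : q.Prime)
  by_contra hcon
  push Not at hcon
  have key : ∀ k : ℕ, ∃ W : Subgroup G, W.Normal ∧ Nat.card W = q ^ (2 * k) ∧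
      ∀ x, x ∈ W ↔ x ^ (q ^ k) = 1 := by
    intro k
    induction k with
    | zero => exact ⟨⊥, inferInstance, by simp, by simp⟩
    | succ k ih =>
      obtain ⟨W, hWn, hWc, hW⟩ := ih
      obtain ⟨H, hH, hHc⟩ := hcon W hWn (IsPGroup.of_card hWc)
      have hpre : (QuotientGroup.mk : G → G ⧸ W) ⁻¹' {x | x ^ q = 1} = {x : G | x ^ (q ^ (k+1)) = 1} := by
        ext x
        simp only [Set.mem_preimage, Set.mem_setOf_eq]
        rw [← QuotientGroup.mk_pow, QuotientGroup.eq_one_iff, hW, ← pow_mul, ← pow_succ']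
      have hc := card_preimage_mk W {x | x ^ q = 1}
      have hle : Nat.card {x : G ⧸ W | x ^ q = 1} ≤ q ^ 2 := by
        have h1 := h (k+1)
        rw [hpre] at hc
        have h2 : Nat.card W * Nat.card {x : G ⧸ W | x ^ q = 1} ≤ q ^ (2 * (k+1)) := by
          rw [← hc]; exact h1
        rw [hWc, mul_add, mul_one, pow_add] at h2
        exact Nat.le_of_mul_le_mul_left h2 (by positivity)
      have hHQ : QC q H := by
        refine ⟨hH, le_trans ?_ hle⟩
        refine Nat.card_le_card_of_injective
          (fun x : {x : H // x ^ q = 1} => (⟨x.1.1, by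
            have := congrArg Subtype.val x.2
            exact this⟩ : {x : G ⧸ W | x ^ q = 1})) ?_
        intro a b hab
        exact Subtype.ext (Subtype.ext (congrArg Subtype.val hab :))
      have hOm : q ^ 2 ≤ Nat.card (Om q H) := by
        by_contra hlt
        exact hHc (hHQ.cyclic h5 (not_le.1 hlt))
      set E : Subgroup (G ⧸ W) := (Om q H).map H.subtype with hE
      have hEc : q ^ 2 ≤ Nat.card E := by
        rw [hE, Subgroup.card_map_of_injective H.subtype_injective]; exact hOm
      have hEs : (E : Set (G ⧸ W)) = {x | x ^ q = 1} := by
        refine Set.eq_of_subset_of_ncard_le ?_ (le_trans hle hEc) (Set.toFinite _)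
        rintro _ ⟨x, hx, rfl⟩
        have := (hHQ.mem_Om x).1 hx
        exact congrArg Subtype.val this
      have hEm : ∀ x, x ∈ E ↔ x ^ q = 1 := fun x => by
        rw [← SetLike.mem_coe, hEs]; rfl
      refine ⟨E.comap (QuotientGroup.mk' W), ?_, ?_, ?_⟩
      · have : E.Normal := ⟨fun x hx g => by
          rw [hEm] at hx ⊢
          rw [conj_pow, hx]; group⟩
        infer_instance
      · have h1 : Nat.card (E.comap (QuotientGroup.mk' W)) = Nat.card W * Nat.card E :=
          card_preimage_mk W (E : Set (G ⧸ W))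
        have h2 : Nat.card E = q ^ 2 := by
          refine le_antisymm ?_ hEc
          refine le_trans (le_of_eq ?_) hle
          rw [← hEs]; rfl
        rw [h1, h2, hWc, mul_add, mul_one, pow_add]
      · intro x
        rw [mem_comap, hEm, QuotientGroup.mk'_apply, ← QuotientGroup.mk_pow, QuotientGroup.eq_one_iff, hW, ← pow_mul,
          ← pow_succ']
  obtain ⟨W, -, hWc, -⟩ := key (Nat.card G)
  have h1 : Nat.card W ≤ Nat.card G := Subgroup.card_le_card_group W
  have h2 : 2 * Nat.card G < q ^ (2 * Nat.card G) := Nat.lt_pow_self hq.one_lt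
  omega

/-- hypothesis on the group that is used -/
def HQ (G : Type*) [Group G] : Prop :=
  (∀ p : ℕ, p.Prime → p ∣ Nat.card G → 5 ≤ p) ∧
  ∀ p : ℕ, p.Prime → ∀ k : ℕ, Nat.card {x : G // x ^ (p ^ k) = 1} ≤ p ^ (2 * k)

lemma HQ.zgroup {G : Type*} [Group G] [Finite G] (h : HQ G) : IsZGroup (G ⧸ Fit G) := by
  refine ⟨fun q hq P => ?_⟩
  have := Fact.mk hq
  by_cases hdvd : q ∣ Nat.card G
  · obtain ⟨W, hWn, hWp, hW⟩ := exists_W (h.1 q hq hdvd) (h.2 q hq)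
    obtain ⟨S, hS⟩ := Sylow.mapSurjective_surjective (QuotientGroup.mk'_surjective (Fit G)) q P
    have hWF : W ≤ Fit G := (le_Op W hWp).trans (Op_le_Fit G hq)
    have h1 := hW _ (S.isPGroup'.map (QuotientGroup.mk' W))
    set φ : G ⧸ W →* G ⧸ Fit G := QuotientGroup.map W (Fit G) (MonoidHom.id G) hWF
    have h2 : (P : Subgroup (G ⧸ Fit G)) = ((S : Subgroup G).map (QuotientGroup.mk' W)).map φ := by
      rw [← hS, Subgroup.map_map]
      rfl
    rw [h2]
    exact isCyclic_of_surjective _ (φ.subgroupMap_surjective ((S : Subgroup G).map (QuotientGroup.mk' W)))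
  · have h1 : Nat.card P = 1 := by
      refine (P.isPGroup'.card_eq_or_dvd).resolve_right fun h2 => hdvd ?_
      refine h2.trans ((Subgroup.card_subgroup_dvd_card _).trans ?_)
      exact Subgroup.card_quotient_dvd_card _
    have := (Nat.card_eq_one_iff_unique.1 h1).1
    infer_instance

lemma HQ.qc {G : Type*} [Group G] [Finite G] (h : HQ G) {p : ℕ} (hp : p.Prime) (H : Subgroup G)
    (hH : IsPGroup p H) : QC p H := by
  refine ⟨hH, le_trans ?_ (h.2 p hp 1)⟩
  refine Nat.card_le_card_of_injective
    (fun x : {x : H // x ^ p = 1} => (⟨x.1.1, by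
      have := congrArg Subtype.val x.2
      rw [pow_one]
      exact this⟩ : {x : G // x ^ (p ^ 1) = 1})) ?_
  intro a b hab
  exact Subtype.ext (Subtype.ext (congrArg Subtype.val hab :))

end QG

namespace QG

open Subgroup
open scoped commutatorElement

lemma commute_of_coprime_pow {A : Type*} [Group A] {s c : A} {p n : ℕ} (hn : n.Coprime p)
    (h1 : Commute s (c ^ n)) (h2 : Commute s (c ^ p)) : Commute s c := by
  have h3 : c = (c ^ n) ^ (Nat.gcdA n p) * (c ^ p) ^ (Nat.gcdB n p) := by
    have := Nat.gcd_eq_gcd_ab n p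
    rw [hn] at this
    rw [← zpow_natCast, ← zpow_natCast, ← zpow_mul, ← zpow_mul, ← zpow_add, ← this]
    simp
  rw [h3]
  exact (h1.zpow_right _).mul_right (h2.zpow_right _)

lemma ring_ML {p : ℕ} [Fact p.Prime] (h5 : 5 ≤ p) {A : Type*} [Ring A] [Algebra (ZMod p) A]
    (c s : Aˣ) (α β : ZMod p) (hq : (c : A) ^ 2 = α • (c : A) + β • 1) {n m j : ℕ}
    (hn : n.Coprime p) (hc : c ^ n = 1) (hm : Odd m) (hs : s ^ m = 1) (hsc : s * c * s⁻¹ = c ^ j) :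
    Commute s c := by
  have h2 : (2 : ZMod p) ≠ 0 := by
    intro h
    have h' : ((2 : ℕ) : ZMod p) = 0 := by exact_mod_cast h
    rw [ZMod.natCast_eq_zero_iff] at h'
    have := Nat.le_of_dvd (by norm_num) h'
    omega
  have hspan : ∀ j : ℕ, ∃ a b : ZMod p, (c : A) ^ j = a • 1 + b • (c : A) := by
    intro j
    induction j with
    | zero => exact ⟨1, 0, by simp⟩
    | succ j ih =>
      obtain ⟨a, b, hab⟩ := ih
      refine ⟨b * β, a + b * α, ?_⟩
      rw [pow_succ, hab, add_mul, smul_mul_assoc, smul_mul_assoc, one_mul, ← pow_two, hq]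
      module
  obtain ⟨a, b, hab⟩ := hspan j
  have hscA : (s : A) * c = (a • 1 + b • (c : A)) * s := by
    rw [← hab]
    have : s * c = c ^ j * s := by rw [← hsc]; group
    exact_mod_cast congrArg Units.val this
  by_cases hsca : ∃ l : ZMod p, (c : A) = l • 1
  · obtain ⟨l, hl⟩ := hsca
    apply Units.ext
    simp [hl]
  set τ := α / 2 with hτ
  have hτ2 : α = 2 * τ := by rw [hτ]; field_simp
  set c0 : A := (c : A) - τ • 1 with hc0
  have hcc : (c : A) = c0 + τ • 1 := by rw [hc0]; abel
  set δ := β + τ ^ 2 with hδ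
  have hc02 : c0 * c0 = δ • 1 := by
    have : c0 * c0 = (c : A) ^ 2 - (2 * τ) • (c : A) + (τ ^ 2) • 1 := by
      rw [hc0]
      simp only [sub_mul, mul_sub, smul_mul_assoc, mul_smul_comm, one_mul, mul_one, pow_two]
      module
    rw [this, hq, hδ, hτ2]
    module
  set e := a + b * τ - τ with he
  have hs0 : (s : A) * c0 = (b • c0 + e • 1) * s := by
    have : (s : A) * c0 = (s : A) * c - τ • (s : A) := by rw [hc0, mul_sub, mul_smul_comm, mul_one]
    rw [this, hscA, he, hc0]
    simp only [add_mul, smul_mul_assoc, one_mul, sub_mul]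
    module
  have hnsc : ∀ l : ZMod p, c0 ≠ l • 1 := by
    intro l hl
    exact hsca ⟨l + τ, by rw [hcc, hl]; module⟩
  have hnt : ∀ l : ZMod p, l • (1 : A) = 0 → l = 0 := by
    intro l hl
    by_contra hne
    have : (1 : A) = 0 := (smul_eq_zero_iff_right hne).1 hl
    exact hnsc 0 (by rw [zero_smul, ← mul_one c0, this, mul_zero])
  have hsq : δ • (1 : A) = (b ^ 2 * δ + e ^ 2) • 1 + (2 * b * e) • c0 := by
    have h1 : (s : A) * (c0 * c0) = ((b ^ 2 * δ + e ^ 2) • 1 + (2 * b * e) • c0) * s := by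
      calc (s : A) * (c0 * c0) = ((s : A) * c0) * c0 := by rw [mul_assoc]
        _ = (b • c0 + e • 1) * ((b • c0 + e • 1) * s) := by rw [hs0, mul_assoc, hs0]
        _ = ((b ^ 2) • (c0 * c0) + (2 * b * e) • c0 + (e ^ 2) • 1) * s := by
            rw [← mul_assoc]
            congr 1
            simp only [add_mul, mul_add, smul_mul_assoc, mul_smul_comm, one_mul, mul_one]
            module
        _ = _ := by
            rw [hc02]; congr 1; module
    rw [hc02, mul_smul_comm, mul_one] at h1
    have h3 : (δ • (1 : A)) * s = ((b ^ 2 * δ + e ^ 2) • 1 + (2 * b * e) • c0) * s := by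
      rw [← h1, smul_mul_assoc, one_mul]
    exact (Units.mul_left_inj s).1 h3
  have hbe : 2 * b * e = 0 := by
    by_contra hne
    apply hnsc ((2 * b * e)⁻¹ * (δ - (b ^ 2 * δ + e ^ 2)))
    have : (2 * b * e) • c0 = (δ - (b ^ 2 * δ + e ^ 2)) • 1 := by
      rw [sub_smul, hsq]; abel
    rw [mul_smul, ← this, smul_smul, inv_mul_cancel₀ hne, one_smul]
  have hb0 : b ≠ 0 := by
    intro hb
    rw [hb, zero_smul, zero_add] at hs0
    apply hnsc e
    have : (s : A) * c0 = s * (e • 1) := by rw [hs0, mul_smul_comm, smul_mul_assoc, one_mul, mul_one]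
    exact (Units.mul_right_inj s).1 this
  have he0 : e = 0 := by
    rcases mul_eq_zero.1 hbe with h | h
    · rcases mul_eq_zero.1 h with h | h
      · exact absurd h h2
      · exact absurd h hb0
    · exact h
  rw [he0, zero_smul, add_zero] at hs0
  have hbδ : b ^ 2 * δ = δ := by
    have : (b ^ 2 * δ - δ) • (1 : A) = 0 := by
      rw [he0] at hsq
      rw [sub_smul, sub_eq_zero]
      refine Eq.trans ?_ hsq.symm
      simp
    exact sub_eq_zero.1 (hnt _ this)
  by_cases hδ0 : δ = 0
  · have hpow : ∀ k : ℕ, (c : A) ^ (k+1) = (τ ^ (k+1)) • 1 + (((k+1 : ℕ) : ZMod p) * τ ^ k) • c0 := by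
      intro k
      induction k with
      | zero => simp [hcc]; abel
      | succ k ih =>
        rw [pow_succ, ih, hcc]
        simp only [add_mul, mul_add, smul_mul_assoc, mul_smul_comm, one_mul, mul_one, hc02, hδ0]
        push_cast
        module
    have hp1 : p = (p - 1) + 1 := by omega
    have hcp : (c : A) ^ p = (τ ^ p) • 1 := by
      have h1 := hpow (p - 1)
      rw [← hp1] at h1
      rw [h1]; simp
    refine commute_of_coprime_pow hn (by rw [hc]; exact Commute.one_right s) ?_
    apply Units.ext
    push_cast
    rw [hcp]; simp
  · have hb2 : b ^ 2 = 1 := mul_right_cancel₀ hδ0 (by rw [hbδ, one_mul])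
    have h1 : Commute ((s : A) * s) c0 := by
      show (s : A) * s * c0 = c0 * (s * s)
      calc (s : A) * s * c0 = s * ((s : A) * c0) := by rw [mul_assoc]
        _ = b • (((s : A) * c0) * s) := by
            conv_lhs => rw [hs0, smul_mul_assoc, mul_smul_comm, ← mul_assoc]
        _ = (b ^ 2) • (c0 * (s * s)) := by
            rw [hs0, smul_mul_assoc, smul_mul_assoc, smul_smul, pow_two, mul_assoc]
        _ = _ := by rw [hb2, one_smul]
    have h3 : Commute (s * s) c := by
      apply Units.ext
      push_cast
      rw [hcc, mul_add, add_mul, h1.eq]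
      simp
    obtain ⟨k, hk⟩ := hm
    have h4 : s = (s * s) ^ (k + 1) := by
      rw [← pow_two, ← pow_mul, show 2 * (k + 1) = m + 1 by omega, pow_succ, hs, one_mul]
    rw [h4]
    exact h3.pow_left _

/-- quadratic relation for endomorphisms in dimension at most two. -/
lemma quad {K V : Type*} [Field K] [AddCommGroup V] [Module K V] [FiniteDimensional K V]
    (hd : Module.finrank K V ≤ 2) (f : Module.End K V) :
    ∃ α β : K, f ^ 2 = α • f + β • 1 := by
  have h1 := LinearMap.aeval_self_charpoly f
  have hm := LinearMap.charpoly_monic f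
  have hdeg := LinearMap.charpoly_natDegree f
  obtain ⟨k, hk⟩ : ∃ k, Module.finrank K V + k = 2 := ⟨2 - Module.finrank K V, by omega⟩
  set P : Polynomial K := f.charpoly * Polynomial.X ^ k with hP
  have hPm : P.Monic := hm.mul (Polynomial.monic_X_pow k)
  have hPd : P.natDegree = 2 := by
    rw [hP, hm.natDegree_mul (Polynomial.monic_X_pow k), Polynomial.natDegree_X_pow, hdeg, hk]
  have hP0 : Polynomial.aeval f P = 0 := by rw [hP, map_mul, h1, zero_mul]
  rw [Polynomial.aeval_eq_sum_range, hPd] at hP0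
  simp only [Finset.sum_range_succ, Finset.sum_range_zero, zero_add, pow_zero, pow_one] at hP0
  have h2 : P.coeff 2 = 1 := by rw [← hPd]; exact hPm
  rw [h2, one_smul] at hP0
  refine ⟨-P.coeff 1, -P.coeff 0, ?_⟩
  rw [← sub_eq_zero, ← hP0]
  module

/-- automorphisms as units of the endomorphism ring -/
noncomputable def toUnit (p : ℕ) {E : Type*} [CommGroup E] [Module (ZMod p) (Additive E)] :
    MulAut E →* (Module.End (ZMod p) (Additive E))ˣ where
  toFun f := ⟨(MulEquiv.toAdditive f).toAddMonoidHom.toZModLinearMap p,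
    (MulEquiv.toAdditive f.symm).toAddMonoidHom.toZModLinearMap p,
    by ext x; simp, by ext x; simp⟩
  map_one' := by ext x; rfl
  map_mul' f g := by ext x; rfl

lemma toUnit_apply {p : ℕ} {E : Type*} [CommGroup E] [Module (ZMod p) (Additive E)]
    (f : MulAut E) (x : E) :
    ((toUnit p f : (Module.End (ZMod p) (Additive E))ˣ) : Module.End (ZMod p) (Additive E))
      (Additive.ofMul x) = Additive.ofMul (f x) := rfl

lemma toUnit_injective {p : ℕ} {E : Type*} [CommGroup E] [Module (ZMod p) (Additive E)] :
    Function.Injective (toUnit p (E := E)) := by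
  intro f g h
  ext x
  apply Additive.ofMul.injective
  rw [← toUnit_apply (p := p) f, h, toUnit_apply]

/-- the matrix lemma -/
lemma aut_ML_aux {p : ℕ} [Fact p.Prime] (h5 : 5 ≤ p) {E : Type*} [CommGroup E] [Finite E]
    [Module (ZMod p) (Additive E)] (hcard : Nat.card E ≤ p ^ 2) (c s : MulAut E) {n m j : ℕ}
    (hn : n.Coprime p) (hc : c ^ n = 1) (hm : Odd m) (hs : s ^ m = 1) (hsc : s * c * s⁻¹ = c ^ j) :
    Commute s c := by
  have hp := (Fact.out : p.Prime)
  have hfin : Finite (Additive E) := inferInstanceAs (Finite E)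
  have hfd : FiniteDimensional (ZMod p) (Additive E) := inferInstance
  have hd : Module.finrank (ZMod p) (Additive E) ≤ 2 := by
    have h1 := Module.natCard_eq_pow_finrank (K := ZMod p) (V := Additive E)
    have h2 : Nat.card (Additive E) = Nat.card E := rfl
    rw [h2, Nat.card_zmod] at h1
    rw [h1] at hcard
    exact (Nat.pow_le_pow_iff_right hp.one_lt).1 hcard
  obtain ⟨α, β, hq⟩ := quad hd ((toUnit p c : (Module.End (ZMod p) (Additive E))ˣ) : Module.End (ZMod p) (Additive E))
  have h1 := ring_ML h5 (toUnit p c) (toUnit p s) α β hq hn (by rw [← map_pow, hc, map_one]) hm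
    (by rw [← map_pow, hs, map_one]) (j := j)
    (by rw [← map_pow, ← map_mul, ← map_inv, ← map_mul, hsc])
  apply toUnit_injective (p := p)
  rw [map_mul, map_mul]
  exact h1

lemma aut_ML {p : ℕ} [Fact p.Prime] (h5 : 5 ≤ p) {E : Type*} [CommGroup E] [Finite E]
    (hE : ∀ x : E, x ^ p = 1) (hcard : Nat.card E ≤ p ^ 2) (c s : MulAut E) {n m j : ℕ}
    (hn : n.Coprime p) (hc : c ^ n = 1) (hm : Odd m) (hs : s ^ m = 1) (hsc : s * c * s⁻¹ = c ^ j) :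
    Commute s c := by
  have hpx : ∀ x : Additive E, p • x = 0 := fun x => congrArg Additive.ofMul (hE x.toMul)
  exact @aut_ML_aux p _ h5 E _ _ (AddCommGroup.zmodModule hpx) hcard c s n m j hn hc hm hs hsc

/-- Maschke -/
lemma maschke_aux {p : ℕ} [Fact p.Prime] {V : Type*} [CommGroup V] [Finite V]
    [Module (ZMod p) (Additive V)] (t : MulAut V) {n : ℕ} (hn : n.Coprime p) (ht : t ^ n = 1)
    (L : Subgroup V) (hL : ∀ x ∈ L, t x ∈ L) :
    ∃ Y : Subgroup V, (∀ x ∈ Y, t x ∈ Y) ∧ L ⊓ Y = ⊥ ∧ L ⊔ Y = ⊤ := by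
  have hp := (Fact.out : p.Prime)
  set f : Module.End (ZMod p) (Additive V) :=
    (toUnit p t : (Module.End (ZMod p) (Additive V))ˣ).val with hf
  have hfa : ∀ x : V, f (Additive.ofMul x) = Additive.ofMul (t x) := fun x => rfl
  have hfn : f ^ n = 1 := by
    rw [hf, ← Units.val_pow_eq_pow_val, ← map_pow, ht, map_one, Units.val_one]
  have hss : f.IsSemisimple := by
    refine Module.End.isSemisimple_of_squarefree_aeval_eq_zero
      (p := (Polynomial.X ^ n - 1 : Polynomial (ZMod p))) ?_ ?_
    · apply Polynomial.Separable.squarefree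
      rw [Polynomial.X_pow_sub_one_separable_iff]
      rw [Ne, ZMod.natCast_eq_zero_iff]
      intro h
      have := Nat.Coprime.eq_one_of_dvd hn.symm h
      exact hp.one_lt.ne' this
    · simp [hfn]
  rw [Module.End.isSemisimple_iff] at hss
  set L' : Submodule (ZMod p) (Additive V) := AddSubgroup.toZModSubmodule p (Subgroup.toAddSubgroup L) with hL'
  have hmem : ∀ x : V, Additive.ofMul x ∈ L' ↔ x ∈ L := fun x => Iff.rfl
  obtain ⟨q, hq1, hq2⟩ := hss L' (fun x hx => hL x.toMul hx)
  refine ⟨Subgroup.toAddSubgroup.symm q.toAddSubgroup, fun x hx => hq1 hx, ?_, ?_⟩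
  · rw [eq_bot_iff]
    rintro x ⟨hx1, hx2⟩
    have := hq2.disjoint.le_bot (x := Additive.ofMul x) ⟨hx1, hx2⟩
    exact this
  · rw [eq_top_iff]
    intro x _
    have h1 : Additive.ofMul x ∈ L' ⊔ q := by rw [hq2.sup_eq_top]; trivial
    obtain ⟨y, hy, z, hz, hyz⟩ := Submodule.mem_sup.1 h1
    have h2 : x = y.toMul * z.toMul := by
      apply Additive.ofMul.injective
      rw [← hyz]; rfl
    rw [h2]
    exact mul_mem_sup hy hz

lemma maschke {p : ℕ} [Fact p.Prime] {V : Type*} [CommGroup V] [Finite V]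
    (hV : ∀ x : V, x ^ p = 1) (t : MulAut V) {n : ℕ} (hn : n.Coprime p) (ht : t ^ n = 1)
    (L : Subgroup V) (hL : ∀ x ∈ L, t x ∈ L) :
    ∃ Y : Subgroup V, (∀ x ∈ Y, t x ∈ Y) ∧ L ⊓ Y = ⊥ ∧ L ⊔ Y = ⊤ := by
  have hpx : ∀ x : Additive V, p • x = 0 := fun x => congrArg Additive.ofMul (hV x.toMul)
  exact @maschke_aux p _ V _ _ (AddCommGroup.zmodModule hpx) t n hn ht L hL

end QG

namespace QG

open Subgroup
open scoped commutatorElement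

lemma cyc_comm {G : Type*} [Group G] (N : Subgroup G) [N.Normal] [hN : IsCyclic N] {g n : G}
    (hg : g ∈ commutator G) (hn : n ∈ N) : g * n = n * g := by
  let _ := (hN.mulAutMulEquiv _).toMonoidHom.commGroupOfInjective (hN.mulAutMulEquiv _).injective
  let φ : G →* MulAut N := MulAut.conjNormal
  have h1 : commutator G ≤ φ.ker := by
    rw [commutator_def, commutator_le]
    intro a _ b _
    rw [MonoidHom.mem_ker, map_commutatorElement, commutatorElement_eq_one_iff_mul_comm]
    obtain ⟨e, he⟩ : ∃ e : MulAut N ≃* (ZMod (Nat.card N))ˣ, True := ⟨hN.mulAutMulEquiv _, trivial⟩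
    apply e.injective
    rw [map_mul, map_mul, mul_comm]
  have h2 : φ g = 1 := h1 hg
  have h3 := congrArg (fun f : MulAut N => (f ⟨n, hn⟩ : G)) h2
  simp only [φ, MulAut.conjNormal_apply, MulAut.one_apply] at h3
  exact mul_inv_eq_iff_eq_mul.1 h3

lemma transfer_triv {Y : Type*} [Group Y] [Finite Y] {r : ℕ} [Fact r.Prime] (Q : Sylow r Y)
    (hQ : (Q : Subgroup Y) ≤ center Y) {y : Y} (h1 : y ∈ Q) (h2 : y ∈ commutator Y) : y = 1 := by
  have hP : normalizer (Q : Set Y) ≤ centralizer (Q : Set Y) := by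
    intro x _
    rw [mem_centralizer_iff]
    intro z hz
    exact ((mem_center_iff.1 (hQ hz)) x).symm
  have hd := MonoidHom.ker_transferSylow_disjoint Q hP Q Q.isPGroup'
  have hk : commutator Y ≤ (MonoidHom.transferSylow Q hP).ker := by
    rw [commutator_def, commutator_le]
    intro a _ b _
    rw [MonoidHom.mem_ker, map_commutatorElement, commutatorElement_eq_one_iff_mul_comm]
    apply Subtype.ext
    exact (mem_center_iff.1 (hQ (SetLike.coe_mem (MonoidHom.transferSylow Q hP b))) _)
  have := hd.le_bot (mem_inf.2 ⟨hk h2, h1⟩)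
  simpa using this

lemma caseA {G : Type*} [Group G] [Finite G] (hodd : Odd (Nat.card G)) {p r : ℕ} [Fact p.Prime]
    [Fact r.Prime] (hpr : r ≠ p) (h5 : 5 ≤ p) (E F : Subgroup G) [E.Normal]
    (hEc : ∀ a ∈ E, ∀ b ∈ E, a * b = b * a) (hEp : ∀ a ∈ E, a ^ p = 1)
    (hcard : Nat.card E ≤ p ^ 2) (hF : ∀ f ∈ F, ∀ e ∈ E, f * e = e * f) (R : Sylow r G)
    (hj : ∀ s : G, ∀ g ∈ R, ∃ j : ℕ, ∃ f ∈ F, s * g * s⁻¹ = g ^ j * f)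
    (hcomm : ∀ g ∈ R, ∃ d ∈ commutator G, ∃ f ∈ F, g = d * f) {g e : G} (hg : g ∈ R)
    (he : e ∈ E) : g * e = e * g := by
  let φ : G →* MulAut E := MulAut.conjNormal
  have hφ : ∀ f, φ f = 1 ↔ ∀ e ∈ E, f * e = e * f := by
    intro f
    constructor
    · intro h e he
      have h3 := congrArg (fun f : MulAut E => (f ⟨e, he⟩ : G)) h
      simp only [φ, MulAut.conjNormal_apply, MulAut.one_apply] at h3
      exact mul_inv_eq_iff_eq_mul.1 h3
    · intro h
      ext e
      simp only [φ, MulAut.conjNormal_apply, MulAut.one_apply]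
      exact mul_inv_eq_iff_eq_mul.2 (h e e.2)
  have hφF : ∀ f ∈ F, φ f = 1 := fun f hf => (hφ f).2 (hF f hf)
  refine (hφ g).1 ?_ e he
  have hcen : ∀ x ∈ R, ∀ s : G, φ s * φ x = φ x * φ s := by
    intro x hx s
    obtain ⟨j, f, hf, hjf⟩ := hj s x hx
    obtain ⟨k, hk⟩ := R.isPGroup' ⟨x, hx⟩
    have hk' : x ^ r ^ k = 1 := congrArg Subtype.val hk
    refine @aut_ML p _ h5 E {(inferInstance : Group E) with
        mul_comm := fun a b => Subtype.ext (hEc a a.2 b b.2)} _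
      (fun x => Subtype.ext (hEp x x.2)) hcard (φ x) (φ s) (r ^ k) (Nat.card G) j ?_ ?_ hodd ?_ ?_
    · exact Nat.Coprime.pow_left _ ((Nat.coprime_primes Fact.out Fact.out).2 hpr)
    · exact (map_pow φ x _).symm.trans (by rw [hk', map_one])
    · exact (map_pow φ s _).symm.trans (by rw [pow_card_eq_one', map_one])
    · have := congrArg φ hjf
      rw [map_mul, map_mul, map_mul, map_inv, map_pow, hφF f hf, mul_one] at this
      exact this
  let ψ := φ.rangeRestrict
  have hψ : Function.Surjective ψ := φ.rangeRestrict_surjective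
  have h1 : ψ g = 1 := by
    apply transfer_triv (R.mapSurjective hψ)
    · rintro _ ⟨x, hx, rfl⟩
      rw [mem_center_iff]
      intro y
      obtain ⟨s, rfl⟩ := hψ y
      exact Subtype.ext (hcen x hx s)
    · exact ⟨g, hg, rfl⟩
    · obtain ⟨d, hd, f, hf, rfl⟩ := hcomm g hg
      have : ψ f = 1 := Subtype.ext (hφF f hf)
      rw [map_mul, this, mul_one]
      have h4 : (commutator G).map ψ ≤ commutator φ.range := by
        rw [_root_.commutator_def, _root_.commutator_def, map_commutator]
        exact commutator_mono le_top le_top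
      exact h4 ⟨d, hd, rfl⟩
  exact congrArg Subtype.val h1

lemma caseB {G : Type*} [Group G] [Finite G] {p r : ℕ} [Fact p.Prime]
    [Fact r.Prime] (hpr : r ≠ p) (E P F : Subgroup G) [E.Normal] [P.Normal]
    (hPp : IsPGroup p P) (hEP : E ≤ P) (hEp : ∀ a ∈ E, a ^ p = 1)
    (hcard : Nat.card E ≤ p ^ 2) (hne : ⁅E, P⁆ ≠ ⊥)
    (hF : P ≤ F → (∀ T : Subgroup G, P ≤ T → centralizer (P : Set G) ≤ T → F ≤ T)) (hPF : P ≤ F)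
    {g e d f : G} {k : ℕ} (hgk : g ^ r ^ k = 1)
    (hd : d ∈ commutator G) (hf : f ∈ F) (hdf : g = d * f)
    (he : e ∈ E) : g * e = e * g := by
  have hp := (Fact.out : p.Prime)
  have hEp' : IsPGroup p E := hPp.to_le hEP
  have hnil : Group.IsNilpotent P := hPp.isNilpotent
  -- transfer to P
  have hE1 : (E.subgroupOf P).map P.subtype = E := by
    rw [map_subgroupOf_eq_of_le hEP]
  have hP1 : (⊤ : Subgroup P).map P.subtype = P := by
    rw [← MonoidHom.range_eq_map, range_subtype]
  have hEb : E.subgroupOf P ≠ ⊥ := by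
    intro h
    rw [h, Subgroup.map_bot] at hE1
    rw [← hE1, commutator_bot_left] at hne
    exact hne rfl
  have hlt := commutator_lt_of_nilp (E.subgroupOf P) hEb
  have hC1 : (⁅E.subgroupOf P, (⊤ : Subgroup P)⁆).map P.subtype = ⁅E, P⁆ := by
    rw [map_commutator, hE1, hP1]
  have hcardE : Nat.card (E.subgroupOf P) = Nat.card E := by
    conv_rhs => rw [← hE1]
    exact (card_map_of_injective P.subtype_injective).symm
  have hCC := comm_comm_eq_bot hPp (E.subgroupOf P) (by rw [hcardE]; exact hcard)
  have hCP : ⁅⁅E, P⁆, P⁆ = ⊥ := by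
    have := congrArg (Subgroup.map P.subtype) hCC
    rwa [map_commutator, hC1, hP1, Subgroup.map_bot] at this
  set C := ⁅E, P⁆ with hC
  have hCE : C < E := by
    have := (map_lt_map_iff_of_injective P.subtype_injective).2 hlt
    rwa [hC1, hE1] at this
  have hcE : p * Nat.card C ≤ Nat.card E := by
    have := card_lt_of_lt hPp hlt
    rw [hcardE] at this
    rwa [← hC1, card_map_of_injective P.subtype_injective]
  have hCp : IsPGroup p C := hEp'.to_le hCE.le
  have hcC : Nat.card C = p := by
    obtain ⟨a, ha⟩ := IsPGroup.iff_card.1 hCp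
    have h1 : Nat.card C ≤ p := by
      by_contra hlt
      push Not at hlt
      nlinarith [hp.pos]
    have h2 : a ≠ 0 := by
      rintro rfl
      exact hne (card_eq_one.1 (by simpa using ha))
    have h3 : a ≤ 1 := by
      rw [ha] at h1
      by_contra h
      push Not at h
      have := Nat.pow_lt_pow_right hp.one_lt h
      rw [pow_one] at this
      omega
    have : a = 1 := by omega
    rw [ha, this, pow_one]
  have hCcyc : IsCyclic C := isCyclic_of_prime_card hcC
  have hEm : Nat.card (E.map (QuotientGroup.mk' C)) ≤ p := by
    rw [← Subgroup.relIndex_ker, QuotientGroup.ker_mk']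
    have h1 := (C.subgroupOf E).card_mul_index
    rw [Nat.card_congr (subgroupOfEquivOfLe hCE.le).toEquiv, hcC] at h1
    change (C.subgroupOf E).index ≤ p
    nlinarith [hp.pos]
  have hEcyc : IsCyclic (E.map (QuotientGroup.mk' C)) := by
    obtain ⟨a, ha⟩ := IsPGroup.iff_card.1 (hEp'.map (QuotientGroup.mk' C))
    have h3 : a ≤ 1 := by
      rw [ha] at hEm
      by_contra h
      push Not at h
      have := Nat.pow_lt_pow_right hp.one_lt h
      rw [pow_one] at this
      omega
    interval_cases a
    · have : Subsingleton (E.map (QuotientGroup.mk' C)) := by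
        exact (Nat.card_eq_one_iff_unique.1 (by simpa using ha)).1
      infer_instance
    · exact isCyclic_of_prime_card (by simpa using ha)
  have hEn : (E.map (QuotientGroup.mk' C)).Normal :=
    Subgroup.Normal.map inferInstance _ (QuotientGroup.mk'_surjective C)
  let T : Subgroup G := centralizer (C : Set G) ⊓
    (centralizer (E.map (QuotientGroup.mk' C) : Set (G ⧸ C))).comap (QuotientGroup.mk' C)
  have hT : ∀ x : G, x ∈ T ↔ (∀ c ∈ C, c * x = x * c) ∧
      ∀ e ∈ E, (QuotientGroup.mk' C e) * QuotientGroup.mk' C x =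
        QuotientGroup.mk' C x * QuotientGroup.mk' C e := by
    intro x
    simp only [T, mem_inf, mem_comap, mem_centralizer_iff]
    constructor
    · rintro ⟨h1, h2⟩
      exact ⟨h1, fun e he => h2 _ ⟨e, he, rfl⟩⟩
    · rintro ⟨h1, h2⟩
      refine ⟨h1, ?_⟩
      rintro _ ⟨e, he, rfl⟩
      exact h2 e he
  have hPT : P ≤ T := by
    intro x hx
    rw [hT]
    constructor
    · intro c hc
      have : ⁅c, x⁆ ∈ ⁅C, P⁆ := commutator_mem_commutator hc hx
      rw [hCP, mem_bot] at this
      exact commutatorElement_eq_one_iff_mul_comm.1 this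
    · intro e he
      have : ⁅e, x⁆ ∈ C := commutator_mem_commutator he hx
      rw [← commutatorElement_eq_one_iff_mul_comm, ← map_commutatorElement]
      exact (QuotientGroup.eq_one_iff _).2 this
  have hPT' : centralizer (P : Set G) ≤ T := by
    intro x hx
    rw [mem_centralizer_iff] at hx
    rw [hT]
    constructor
    · intro c hc
      exact hx c (hEP (hCE.le hc))
    · intro e he
      rw [← map_mul, ← map_mul, hx e (hEP he)]
  have hFT := hF hPF T hPT hPT'
  have hGT : commutator G ≤ T := by
    intro x hx
    rw [hT]
    constructor
    · intro c hc
      exact (cyc_comm C hx hc).symm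
    · intro e he
      refine (cyc_comm (E.map (QuotientGroup.mk' C)) ?_ ⟨e, he, rfl⟩).symm
      have h4 : (commutator G).map (QuotientGroup.mk' C) ≤ commutator (G ⧸ C) := by
        rw [_root_.commutator_def, _root_.commutator_def, map_commutator]
        exact commutator_mono le_top le_top
      exact h4 ⟨x, hx, rfl⟩
  have hgT : g ∈ T := hdf ▸ T.mul_mem (hGT hd) (hFT hf)
  rw [hT] at hgT
  obtain ⟨h1, h2⟩ := hgT
  have hc : g * e * g⁻¹ * e⁻¹ ∈ C := by
    rw [← QuotientGroup.eq_one_iff]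
    have := h2 e he
    change QuotientGroup.mk' C (g * e * g⁻¹ * e⁻¹) = 1
    rw [map_mul, map_mul, map_mul, ← this]
    simp
  set c := g * e * g⁻¹ * e⁻¹ with hcd
  have hge : g * e * g⁻¹ = c * e := by rw [hcd]; group
  have hn : ∀ n : ℕ, g ^ n * e * (g ^ n)⁻¹ = c ^ n * e := by
    intro n
    induction n with
    | zero => simp
    | succ n ih =>
      have : g ^ (n + 1) * e * (g ^ (n + 1))⁻¹ = g * (g ^ n * e * (g ^ n)⁻¹) * g⁻¹ := by
        rw [pow_succ']; group
      rw [this, ih]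
      have h3 : g * (c ^ n * e) * g⁻¹ = (g * c ^ n * g⁻¹) * (g * e * g⁻¹) := by group
      rw [h3, ← h1 _ (C.pow_mem hc n), hge, pow_succ]
      group
  have h3 := hn (r ^ k)
  rw [hgk] at h3
  have h4 : c ^ r ^ k = 1 := by simpa using h3.symm
  have h5 : c ^ p = 1 := hEp c (hCE.le hc)
  have h6 : c = 1 := by
    rw [← orderOf_eq_one_iff, ← Nat.dvd_one]
    have hco : (r ^ k).Coprime p :=
      Nat.Coprime.pow_left _ ((Nat.coprime_primes Fact.out Fact.out).2 hpr)
    rw [← hco]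
    exact Nat.dvd_gcd (orderOf_dvd_of_pow_eq_one h4) (orderOf_dvd_of_pow_eq_one h5)
  rw [h6, one_mul] at hge
  exact mul_inv_eq_iff_eq_mul.1 hge

end QG

namespace QG

open Subgroup
open scoped commutatorElement

instance Om_char (p : ℕ) (S : Type*) [Group S] : (Om p S).Characteristic := by
  rw [characteristic_iff_map_le]
  intro φ
  unfold Om
  rw [MonoidHom.map_closure, closure_le]
  rintro _ ⟨x, hx, rfl⟩
  apply Subgroup.subset_closure
  change (φ x) ^ p = 1
  have hx' : x ^ p = 1 := hx
  rw [← map_pow, hx', map_one]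

lemma Fit_le_of {G : Type*} [Group G] [Finite G] {p : ℕ} (hp : p.Prime) (T : Subgroup G)
    (h1 : Op p G ≤ T) (h2 : centralizer (Op p G : Set G) ≤ T) : Fit G ≤ T := by
  unfold Fit OO
  refine iSup_le fun q => ?_
  by_cases hqp : q.1 = p
  · rw [hqp]; exact h1
  · refine le_trans ?_ h2
    intro x hx
    rw [mem_centralizer_iff]
    intro y hy
    exact Op_commute hp (Nat.prime_of_mem_primeFactors q.2) (Ne.symm hqp) hy hx

lemma HQ.odd {G : Type*} [Group G] [Finite G] (h : HQ G) : Odd (Nat.card G) := by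
  rw [← Nat.not_even_iff_odd, even_iff_two_dvd]
  intro h2
  have := h.1 2 Nat.prime_two h2
  omega

lemma HQ.centr {G : Type*} [Group G] [Finite G] (h : HQ G) {p r : ℕ} [Fact p.Prime]
    [Fact r.Prime] (hpr : r ≠ p) (R : Sylow r G)
    (hj : ∀ s : G, ∀ g ∈ R, ∃ j : ℕ, ∃ f ∈ Fit G, s * g * s⁻¹ = g ^ j * f)
    (hcomm : ∀ g ∈ R, ∃ d ∈ commutator G, ∃ f ∈ Fit G, g = d * f) {g x : G} (hg : g ∈ R)
    (hx : x ∈ Op p G) : g * x = x * g := by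
  have hp := (Fact.out : p.Prime)
  by_cases hdvd : p ∣ Nat.card G
  swap
  · obtain ⟨k, hk⟩ := (Op_pgroup p G) ⟨x, hx⟩
    have hk' : x ^ p ^ k = 1 := congrArg Subtype.val hk
    have hco : (p ^ k).Coprime (Nat.card G) :=
      Nat.Coprime.pow_left _ ((Nat.Prime.coprime_iff_not_dvd hp).2 hdvd)
    have : x = 1 := by
      rw [← orderOf_eq_one_iff, ← Nat.dvd_one, ← hco]
      exact Nat.dvd_gcd (orderOf_dvd_of_pow_eq_one hk') (orderOf_dvd_natCard x)
    simp [this]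
  have h5 := h.1 p hp hdvd
  have hqc : QC p (Op p G) := h.qc hp _ (Op_pgroup p G)
  obtain ⟨k, hk⟩ := R.isPGroup' ⟨g, hg⟩
  have hk' : g ^ r ^ k = 1 := congrArg Subtype.val hk
  let E : Subgroup G := (Om p (Op p G)).map (Op p G).subtype
  have hE : ∀ e, e ∈ E ↔ e ∈ Op p G ∧ e ^ p = 1 := by
    intro e
    constructor
    · rintro ⟨y, hy, rfl⟩
      refine ⟨y.2, ?_⟩
      have := (hqc.mem_Om y).1 hy
      exact congrArg Subtype.val this
    · rintro ⟨h1, h2⟩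
      exact ⟨⟨e, h1⟩, (hqc.mem_Om _).2 (Subtype.ext h2), rfl⟩
  have hEn : E.Normal := by
    refine ⟨fun e he s => ?_⟩
    rw [hE] at he ⊢
    refine ⟨(Op_normal p G).conj_mem e he.1 s, ?_⟩
    rw [conj_pow, he.2]; simp
  have hEP : E ≤ Op p G := fun e he => ((hE e).1 he).1
  have hEp : ∀ a ∈ E, a ^ p = 1 := fun e he => ((hE e).1 he).2
  have hcard : Nat.card E ≤ p ^ 2 := by
    rw [card_map_of_injective (subtype_injective _)]
    exact hqc.card_Om
  have hEc : ∀ a ∈ E, ∀ b ∈ E, a * b = b * a := by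
    have hEpg : IsPGroup p E := (Op_pgroup p G).to_le hEP
    intro a ha b hb
    exact congrArg Subtype.val (comm_of_card_le hEpg hcard ⟨a, ha⟩ ⟨b, hb⟩)
  have hgE : ∀ e ∈ E, g * e = e * g := by
    intro e he
    by_cases hC : ⁅E, Op p G⁆ = ⊥
    · refine caseA h.odd hpr h5 E (Fit G) hEc hEp hcard ?_ R hj hcomm hg he
      have h1 : Fit G ≤ centralizer (E : Set G) := by
        apply Fit_le_of hp
        · intro y hy
          rw [mem_centralizer_iff]
          intro e he
          have : ⁅e, y⁆ ∈ ⁅E, Op p G⁆ := commutator_mem_commutator he hy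
          rw [hC, mem_bot] at this
          exact commutatorElement_eq_one_iff_mul_comm.1 this
        · exact centralizer_le hEP
      intro f hf e he
      exact (mem_centralizer_iff.1 (h1 hf) e he).symm
    · obtain ⟨d, hd, f, hf, hdf⟩ := hcomm g hg
      exact caseB hpr E (Op p G) (Fit G) (Op_pgroup p G) hEP hEp hcard hC
        (fun _ T h1 h2 => Fit_le_of hp T h1 h2) (Op_le_Fit G hp) hk' hd hf hdf he
  have key := hqc.aut_trivial h5 (MulAut.conjNormal g) (r ^ k)
    (Nat.Coprime.pow_left _ ((Nat.coprime_primes Fact.out Fact.out).2 hpr))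
    (by rw [← map_pow, hk', map_one])
    (fun e he => by
      apply Subtype.ext
      rw [MulAut.conjNormal_apply]
      exact mul_inv_eq_iff_eq_mul.2 (hgE e ((hE e).2 ⟨e.2, congrArg Subtype.val he⟩)))
    ⟨x, hx⟩
  have := congrArg Subtype.val key
  rw [MulAut.conjNormal_apply] at this
  exact mul_inv_eq_iff_eq_mul.1 this

lemma HQ.R_le {G : Type*} [Group G] [Finite G] (h : HQ G) {r : ℕ}
    [Fact r.Prime] (R : Sylow r G)
    (hj : ∀ s : G, ∀ g ∈ R, ∃ j : ℕ, ∃ f ∈ Fit G, s * g * s⁻¹ = g ^ j * f)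
    (hcomm : ∀ g ∈ R, ∃ d ∈ commutator G, ∃ f ∈ Fit G, g = d * f) :
    (R : Subgroup G) ≤ Fit G := by
  have hr := (Fact.out : r.Prime)
  have hFN : Fit G ≤ normalizer ((R : Subgroup G) : Set G) := by
    unfold Fit OO
    refine iSup_le fun q => ?_
    have hq := (Nat.prime_of_mem_primeFactors q.2)
    by_cases hqr : q.1 = r
    · rw [hqr]; exact (Op_le_sylow R).trans le_normalizer
    · have := Fact.mk hq
      intro y hy
      rw [mem_normalizer_iff]
      have key : ∀ z ∈ Op q.1 G, ∀ g ∈ R, z * g * z⁻¹ = g := fun z hz g hg => by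
        rw [← h.centr (Ne.symm hqr) R hj hcomm hg hz]; group
      intro g
      constructor
      · intro hg
        change y * g * y⁻¹ ∈ R
        change g ∈ R at hg
        rw [key y hy g hg]; exact hg
      · intro hg
        have := key y⁻¹ (inv_mem hy) _ hg
        have h2 : y⁻¹ * (y * g * y⁻¹) * y⁻¹⁻¹ = g := by group
        rw [h2] at this
        rw [this]; exact hg
  have hn : (R : Subgroup G).Normal := by
    refine ⟨fun g hg s => ?_⟩
    obtain ⟨j, f, hf, e⟩ := hj s g hg
    have h1 : s * g * s⁻¹ ∈ normalizer ((R : Subgroup G) : Set G) := by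
      rw [e]
      exact mul_mem (pow_mem (le_normalizer hg) _) (hFN hf)
    have h2 : IsPGroup r (zpowers (s * g * s⁻¹)) := by
      have h3 : IsPGroup r ((R : Subgroup G).map (MulAut.conj s).toMonoidHom) :=
        R.isPGroup'.map _
      refine h3.to_le ?_
      rw [zpowers_le]
      exact ⟨g, hg, rfl⟩
    have h4 := h2.inf_normalizer_sylow R
    have h5 : s * g * s⁻¹ ∈ zpowers (s * g * s⁻¹) ⊓ normalizer ((R : Subgroup G) : Set G) :=
      ⟨mem_zpowers _, h1⟩
    have h6 : s * g * s⁻¹ ∈ zpowers (s * g * s⁻¹) ⊓ (R : Subgroup G) := h4.le h5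
    exact h6.2
  exact (le_Op (R : Subgroup G) R.isPGroup').trans (Op_le_Fit G hr)

lemma HQ.quot_cyclic {G : Type*} [Group G] [Finite G] (h : HQ G) : IsCyclic (G ⧸ Fit G) := by
  have hz := h.zgroup
  have hcyc := IsZGroup.isCyclic_commutator (G := G ⧸ Fit G)
  have hco := IsZGroup.coprime_commutator_index (G := G ⧸ Fit G)
  have hmap : ∀ x ∈ commutator (G ⧸ Fit G), ∃ d ∈ commutator G, (d : G ⧸ Fit G) = x := by
    have : (commutator G).map (QuotientGroup.mk' (Fit G)) = commutator (G ⧸ Fit G) := by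
      rw [_root_.commutator_def, _root_.commutator_def, map_commutator, ← MonoidHom.range_eq_map,
        MonoidHom.range_eq_top.2 (QuotientGroup.mk'_surjective _)]
    intro x hx
    rw [← this] at hx
    exact hx
  have hbot : commutator (G ⧸ Fit G) = ⊥ := by
    by_contra hne
    have hc1 : Nat.card (commutator (G ⧸ Fit G)) ≠ 1 := fun h1 => hne (card_eq_one.1 h1)
    obtain ⟨r, hr, hrd⟩ := Nat.exists_prime_and_dvd hc1
    have := Fact.mk hr
    obtain ⟨R⟩ := (Sylow.nonempty (p := r) (G := G))
    have hRc : ∀ g ∈ R, (g : G ⧸ Fit G) ∈ commutator (G ⧸ Fit G) := by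
      intro g hg
      obtain ⟨k, hk⟩ := R.isPGroup' ⟨g, hg⟩
      have hk' : g ^ r ^ k = 1 := congrArg Subtype.val hk
      rw [← QuotientGroup.eq_one_iff (N := commutator (G ⧸ Fit G))]
      set y := ((g : G ⧸ Fit G) : (G ⧸ Fit G) ⧸ commutator (G ⧸ Fit G)) with hy
      have h1 : y ^ r ^ k = 1 := by
        rw [hy, ← QuotientGroup.mk_pow, ← QuotientGroup.mk_pow, hk']; rfl
      have h2 : orderOf y ∣ (commutator (G ⧸ Fit G)).index := orderOf_dvd_natCard y
      rw [← orderOf_eq_one_iff, ← Nat.dvd_one]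
      have hco' : (r ^ k).Coprime (commutator (G ⧸ Fit G)).index :=
        Nat.Coprime.pow_left _ (Nat.Coprime.coprime_dvd_left hrd hco)
      rw [← hco']
      exact Nat.dvd_gcd (orderOf_dvd_of_pow_eq_one h1) h2
    have hR := h.R_le R (by
      intro s g hg
      let σ : MulAut (commutator (G ⧸ Fit G)) := MulAut.conjNormal (s : G ⧸ Fit G)
      obtain ⟨m, hm⟩ := MonoidHom.map_cyclic σ.toMonoidHom
      have h1 := congrArg Subtype.val (hm ⟨g, hRc g hg⟩)
      have h2 : (s : G ⧸ Fit G) * g * (s : G ⧸ Fit G)⁻¹ = (g : G ⧸ Fit G) ^ m := by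
        simpa [σ] using h1
      obtain ⟨j, hj⟩ : ∃ j : ℕ, g ^ m = g ^ j := by
        have : g ^ m ∈ zpowers g := ⟨m, rfl⟩
        rw [← mem_powers_iff_mem_zpowers] at this
        obtain ⟨j, hj⟩ := this
        exact ⟨j, hj.symm⟩
      refine ⟨j, (g ^ j)⁻¹ * (s * g * s⁻¹), ?_, by group⟩
      rw [← QuotientGroup.eq, QuotientGroup.mk_pow]
      have h3 : (g : G ⧸ Fit G) ^ m = (g : G ⧸ Fit G) ^ j := by
        rw [← QuotientGroup.mk_zpow, hj, QuotientGroup.mk_pow]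
      rw [← h3, ← h2]; rfl) (by
      intro g hg
      obtain ⟨d, hd, hdx⟩ := hmap _ (hRc g hg)
      exact ⟨d, hd, d⁻¹ * g, QuotientGroup.eq.1 hdx, by group⟩)
    let R' := R.mapSurjective (QuotientGroup.mk'_surjective (Fit G))
    have hR' : (R' : Subgroup (G ⧸ Fit G)) = ⊥ := by
      rw [eq_bot_iff]
      rintro _ ⟨g, hg, rfl⟩
      exact (QuotientGroup.eq_one_iff _).2 (hR hg)
    have h1 : r ∣ Nat.card R' :=
      R'.dvd_card_of_dvd_card (hrd.trans (card_subgroup_dvd_card _))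
    rw [card_eq_one.2 hR'] at h1
    exact hr.one_lt.ne' (Nat.dvd_one.1 h1)
  have hcm : ∀ a b : G ⧸ Fit G, a * b = b * a := by
    intro a b
    have : ⁅a, b⁆ ∈ commutator (G ⧸ Fit G) := commutator_mem_commutator (mem_top a) (mem_top b)
    rw [hbot, mem_bot] at this
    exact commutatorElement_eq_one_iff_mul_comm.1 this
  have : IsMulCommutative (G ⧸ Fit G) := ⟨⟨hcm⟩⟩
  have hnil : Group.IsNilpotent (G ⧸ Fit G) :=
    @CommGroup.isNilpotent _ {(inferInstance : Group (G ⧸ Fit G)) with mul_comm := hcm}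
  infer_instance

end QG

namespace QG

open Subgroup
open scoped commutatorElement

lemma cyc_pow {B : Type*} [Group B] [Finite B] [IsCyclic B] {p : ℕ} (hp : 0 < p) :
    Nat.card {x : B // x ^ p = 1} ≤ p := by
  classical
  have := Fintype.ofFinite B
  rw [Nat.card_eq_fintype_card, Fintype.card_subtype]
  exact IsCyclic.card_pow_eq_one_le hp

lemma ext_cyc {Γ : Type*} [Group Γ] [Finite Γ] {p : ℕ} [Fact p.Prime] (h5 : 5 ≤ p)
    (S : Subgroup Γ) [S.Normal] (hS : QC p S) (hidx : (Nat.card (Γ ⧸ S)).Coprime p)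
    (hcyc : IsCyclic (Γ ⧸ S)) (B : Subgroup Γ) [B.Normal] [IsCyclic B] (hBS : B ≤ S)
    (hB : B ≠ ⊥) (hcom : ∀ x ∈ S, ∀ y ∈ S, ⁅x, y⁆ ∈ B)
    (hno : ¬ IsCyclic (S.map (QuotientGroup.mk' B))) :
    ∃ Y : Subgroup Γ, Y.Normal ∧ IsCyclic Y ∧ B < Y ∧ Y ≤ S := by
  have hp := (Fact.out : p.Prime)
  set π := QuotientGroup.mk' B with hπ
  have hπs : Function.Surjective π := QuotientGroup.mk'_surjective B
  have hπ1 : ∀ x, π x = 1 ↔ x ∈ B := fun x => QuotientGroup.eq_one_iff x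
  set Sb := S.map π with hSb
  have hSbn : Sb.Normal := Subgroup.Normal.map inferInstance _ hπs
  have hSbp : IsPGroup p Sb := hS.1.map π
  have hSbc : ∀ x ∈ Sb, ∀ y ∈ Sb, x * y = y * x := by
    rintro _ ⟨x, hx, rfl⟩ _ ⟨y, hy, rfl⟩
    rw [← commutatorElement_eq_one_iff_mul_comm, ← map_commutatorElement, hπ1]
    exact hcom x hx y hy
  let V : Subgroup (Γ ⧸ B) :=
    { carrier := {x | x ∈ Sb ∧ x ^ p = 1}
      mul_mem' := by
        rintro a b ⟨ha, ha'⟩ ⟨hb, hb'⟩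
        refine ⟨mul_mem ha hb, ?_⟩
        rw [(show Commute a b from hSbc a ha b hb).mul_pow, ha', hb', one_mul]
      one_mem' := ⟨one_mem _, one_pow _⟩
      inv_mem' := by
        rintro a ⟨ha, ha'⟩
        exact ⟨inv_mem ha, by rw [inv_pow, ha', inv_one]⟩ }
  have hV : ∀ x, x ∈ V ↔ x ∈ Sb ∧ x ^ p = 1 := fun x => Iff.rfl
  have hVn : V.Normal := by
    refine ⟨fun e he s => ?_⟩
    rw [hV] at he ⊢
    refine ⟨hSbn.conj_mem e he.1 s, ?_⟩
    rw [conj_pow, he.2]; simp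
  have hVcard : p ^ 2 ≤ Nat.card V := by
    by_contra hlt
    push Not at hlt
    apply hno
    have e : {x : Sb // x ^ p = 1} ≃ V :=
      { toFun := fun x => ⟨x.1.1, x.1.2, congrArg Subtype.val x.2⟩
        invFun := fun x => ⟨⟨x.1, x.2.1⟩, Subtype.ext x.2.2⟩
        left_inv := fun x => rfl
        right_inv := fun x => rfl }
    have hqc : QC p Sb := ⟨hSbp, by rw [Nat.card_congr e]; exact hlt.le⟩
    refine hqc.cyclic h5 ?_
    rw [Nat.card_congr (Equiv.subtypeEquivRight fun x => hqc.mem_Om x)]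
    change Nat.card {x : Sb // x ^ p = 1} < _
    rw [Nat.card_congr e]; exact hlt
  -- E
  let E : Subgroup Γ := (Om p S).map S.subtype
  have hE : ∀ e, e ∈ E ↔ e ∈ S ∧ e ^ p = 1 := by
    intro e
    constructor
    · rintro ⟨y, hy, rfl⟩
      exact ⟨y.2, congrArg Subtype.val ((hS.mem_Om y).1 hy)⟩
    · rintro ⟨h1, h2⟩
      exact ⟨⟨e, h1⟩, (hS.mem_Om _).2 (Subtype.ext h2), rfl⟩
  have hEcard : Nat.card E ≤ p ^ 2 := by
    rw [card_map_of_injective (subtype_injective _)]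
    exact hS.card_Om
  have hEmV : E.map π ≤ V := by
    rintro _ ⟨e, he, rfl⟩
    replace he := (hE e).1 he
    exact ⟨⟨e, he.1, rfl⟩, by rw [← map_pow, he.2, map_one]⟩
  have hLcard : Nat.card (E.map π) ≤ p := by
    rw [← Subgroup.relIndex_ker, QuotientGroup.ker_mk']
    have h1 := (B.subgroupOf E).card_mul_index
    have h2 : p ≤ Nat.card (B.subgroupOf E) := by
      have hBp : IsPGroup p B := hS.1.to_le hBS
      have hd : p ∣ Nat.card B :=
        hBp.card_eq_or_dvd.resolve_left fun h => hB (card_eq_one.1 h)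
      obtain ⟨b, hb⟩ := exists_prime_orderOf_dvd_card' p hd
      have hbp : (b : Γ) ^ p = 1 := by
        have := pow_orderOf_eq_one b
        rw [hb] at this
        exact congrArg Subtype.val this
      have hbE : (b : Γ) ∈ E := (hE _).2 ⟨hBS b.2, hbp⟩
      let b' : B.subgroupOf E := ⟨⟨b, hbE⟩, b.2⟩
      have : orderOf b' = p := by
        rw [← hb, ← Subgroup.orderOf_coe, ← Subgroup.orderOf_coe, ← Subgroup.orderOf_coe]
      rw [← this]
      exact Nat.le_of_dvd Nat.card_pos (orderOf_dvd_natCard b')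
    change (B.subgroupOf E).index ≤ p
    nlinarith [hp.pos]
  let L : Subgroup V := (E.map π).subgroupOf V
  -- generator
  obtain ⟨τ, hτ⟩ := hcyc.exists_generator
  obtain ⟨t, rfl⟩ := QuotientGroup.mk_surjective τ
  have hdec : ∀ x : Γ, ∃ i : ℕ, ∃ s ∈ S, x = t ^ i * s := by
    intro x
    obtain ⟨i, hi⟩ := mem_powers_iff_mem_zpowers.2 (hτ (x : Γ ⧸ S))
    refine ⟨i, (t ^ i)⁻¹ * x, ?_, by group⟩
    rw [← QuotientGroup.eq]
    simpa using hi
  have htn : t ^ (Nat.card (Γ ⧸ S)) ∈ S := by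
    rw [← QuotientGroup.eq_one_iff, QuotientGroup.mk_pow]
    exact pow_card_eq_one'
  let T : MulAut V := MulAut.conjNormal (π t)
  have hTn : T ^ (Nat.card (Γ ⧸ S)) = 1 := by
    change (MulAut.conjNormal (π t)) ^ _ = (1 : MulAut V)
    rw [← map_pow, ← map_pow]
    ext v
    rw [MulAut.conjNormal_apply, MulAut.one_apply, mul_inv_eq_iff_eq_mul]
    exact hSbc _ ⟨_, htn, rfl⟩ _ v.2.1
  have hL : ∀ x ∈ L, T x ∈ L := by
    intro x hx
    rw [mem_subgroupOf] at hx ⊢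
    obtain ⟨e, he, hex⟩ := hx
    refine ⟨t * e * t⁻¹, ?_, ?_⟩
    · have he' := (hE e).1 he
      refine (hE _).2 ⟨Subgroup.Normal.conj_mem inferInstance e he'.1 t, ?_⟩
      rw [conj_pow, he'.2]; simp
    · rw [MulAut.conjNormal_apply, ← hex, map_mul, map_mul, map_inv]
  obtain ⟨Y', hYT, hYL, hYL'⟩ := @maschke p _ V {(inferInstance : Group V) with
        mul_comm := fun a b => Subtype.ext (hSbc a a.2.1 b b.2.1)} _
      (fun x => Subtype.ext x.2.2) T _ hidx hTn L hL
  let Y2 : Subgroup (Γ ⧸ B) := Y'.map V.subtype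
  have hY2 : ∀ y ∈ Y2, ∃ h : y ∈ V, (⟨y, h⟩ : V) ∈ Y' := by
    rintro _ ⟨y, hy, rfl⟩
    exact ⟨y.2, hy⟩
  have hY2n : Y2.Normal := by
    refine ⟨fun y hy x => ?_⟩
    obtain ⟨x, rfl⟩ := hπs x
    obtain ⟨i, s, hs, rfl⟩ := hdec x
    have h1 : π s * y * (π s)⁻¹ = y := by
      rw [mul_inv_eq_iff_eq_mul]
      exact hSbc _ ⟨s, hs, rfl⟩ _ (hY2 y hy).1.1
    have h2 : ∀ i : ℕ, (π t) ^ i * y * ((π t) ^ i)⁻¹ ∈ Y2 := by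
      intro i
      induction i with
      | zero => simpa using hy
      | succ i ih =>
        obtain ⟨hv, hv'⟩ := hY2 _ ih
        refine ⟨_, hYT _ hv', ?_⟩
        change ((MulAut.conjNormal (π t) (⟨_, hv⟩ : V) : V) : Γ ⧸ B) = _
        rw [MulAut.conjNormal_apply, pow_succ']
        group
    have h3 : π (t ^ i * s) * y * (π (t ^ i * s))⁻¹ =
        (π t) ^ i * (π s * y * (π s)⁻¹) * ((π t) ^ i)⁻¹ := by
      rw [map_mul, map_pow]; group
    rw [h3, h1]
    exact h2 i
  have hY2ne : Y2 ≠ ⊥ := by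
    intro hb
    have h1 : Y' = ⊥ := (Subgroup.map_eq_bot_iff_of_injective _ (subtype_injective V)).1 hb
    rw [h1] at hYL'
    have h2 : L = ⊤ := by simpa using hYL'
    have h3 : V ≤ E.map π := by
      intro v hv
      have : (⟨v, hv⟩ : V) ∈ L := by rw [h2]; exact mem_top _
      exact this
    have h4 := Nat.card_le_card_of_injective _ (Subgroup.inclusion_injective h3)
    nlinarith [hp.two_le]
  let Y : Subgroup Γ := Y2.comap π
  have hBY : B ≤ Y := by
    intro b hb
    change π b ∈ Y2
    rw [(hπ1 b).2 hb]; exact one_mem _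
  have hYS : Y ≤ S := by
    intro y hy
    obtain ⟨s, hs, hsy⟩ := (hY2 _ hy).1.1
    have h1 : s⁻¹ * y ∈ B := by
      rw [← hπ1, map_mul, map_inv, hsy]; simp
    have := mul_mem hs (hBS h1)
    simpa using this
  refine ⟨Y, inferInstance, ?_, lt_of_le_of_ne hBY ?_, hYS⟩
  · have hqc : QC p Y := hS.of_injective (inclusion hYS) (inclusion_injective hYS)
    refine hqc.cyclic h5 ?_
    rw [Nat.card_congr (Equiv.subtypeEquivRight fun x => hqc.mem_Om x)]
    have key : ∀ y ∈ Y, y ^ p = 1 → y ∈ B := by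
      intro y hy hyp
      rw [← hπ1]
      obtain ⟨hv, hv'⟩ := hY2 _ hy
      have h1 : (⟨π y, hv⟩ : V) ∈ L := ⟨y, (hE y).2 ⟨hYS hy, hyp⟩, rfl⟩
      have h2 : (⟨π y, hv⟩ : V) ∈ L ⊓ Y' := ⟨h1, hv'⟩
      have h3 : (⟨π y, hv⟩ : V) ∈ (⊥ : Subgroup V) := hYL.le h2
      exact congrArg Subtype.val (mem_bot.1 h3)
    have h1 : Nat.card {x : Y // x ^ p = 1} ≤ Nat.card {x : B // x ^ p = 1} := by
      refine Nat.card_le_card_of_injective (fun x : {x : Y // x ^ p = 1} =>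
        (⟨⟨x.1.1, key x.1.1 x.1.2 (congrArg (fun z : Y => (z : Γ)) x.2)⟩,
          Subtype.ext (congrArg (fun z : Y => (z : Γ)) x.2)⟩ : {x : B // x ^ p = 1})) ?_
      intro a b hab
      have : a.1.1 = b.1.1 := congrArg (fun z : {x : B // x ^ p = 1} => (z.1 : Γ)) hab
      exact Subtype.ext (Subtype.ext this)
    have h2 := h1.trans (cyc_pow hp.pos)
    refine lt_of_le_of_lt h2 ?_
    nlinarith [hp.two_le]
  · intro hBY'
    apply hY2ne
    rw [eq_bot_iff]
    intro y hy
    obtain ⟨x, rfl⟩ := hπs y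
    have : x ∈ B := by rw [hBY']; exact hy
    exact mem_bot.2 ((hπ1 x).2 this)

lemma lemmaM {Γ : Type*} [Group Γ] [Finite Γ] {p : ℕ} [Fact p.Prime] (h5 : 5 ≤ p)
    (S : Subgroup Γ) [S.Normal] (hS : QC p S) (hidx : (Nat.card (Γ ⧸ S)).Coprime p)
    (hcyc : IsCyclic (Γ ⧸ S)) {x y : Γ} (hx : x ∈ commutator Γ) (hy : y ∈ commutator Γ) :
    x * y = y * x := by
  have hΓS : commutator Γ ≤ S := by
    rw [_root_.commutator_def, commutator_le]
    intro a _ b _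
    rw [← QuotientGroup.eq_one_iff]
    change QuotientGroup.mk' S ⁅a, b⁆ = 1
    rw [map_commutatorElement, commutatorElement_eq_one_iff_mul_comm]
    obtain ⟨g, hg⟩ := hcyc.exists_generator
    obtain ⟨i, hi⟩ := hg (QuotientGroup.mk' S a)
    obtain ⟨j, hj⟩ := hg (QuotientGroup.mk' S b)
    simp only at hi hj
    rw [← hi, ← hj, ← zpow_add, ← zpow_add, add_comm]
  by_cases hab : ∀ a ∈ S, ∀ b ∈ S, a * b = b * a
  · exact hab x (hΓS hx) y (hΓS hy)
  let D : Subgroup Γ := (commutator S).map S.subtype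
  have hDn : D.Normal := inferInstance
  have hDcyc : IsCyclic D := by
    have := hS.commutator_cyclic h5
    exact isCyclic_of_surjective _
      ((commutator S).equivMapOfInjective S.subtype S.subtype_injective).surjective
  have hDcom : ∀ a ∈ S, ∀ b ∈ S, ⁅a, b⁆ ∈ D := by
    intro a ha b hb
    exact ⟨⁅⟨a, ha⟩, ⟨b, hb⟩⁆, commutator_mem_commutator (mem_top _) (mem_top _), rfl⟩
  obtain ⟨B, hDB, hBmax⟩ := Finite.exists_le_maximal
    (p := fun B : Subgroup Γ => B.Normal ∧ IsCyclic B ∧ B ≤ S) (a := D)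
    ⟨hDn, hDcyc, map_subtype_le _⟩
  obtain ⟨hBn, hBc, hBS⟩ := hBmax.prop
  have hBne : B ≠ ⊥ := by
    rintro rfl
    apply hab
    intro a ha b hb
    have := hDB (hDcom a ha b hb)
    exact commutatorElement_eq_one_iff_mul_comm.1 (mem_bot.1 this)
  have hSB : IsCyclic (S.map (QuotientGroup.mk' B)) := by
    by_contra hno
    obtain ⟨Y, h1, h2, h3, h4⟩ := ext_cyc h5 S hS hidx hcyc B hBS hBne
      (fun a ha b hb => hDB (hDcom a ha b hb)) hno
    exact h3.not_ge (hBmax.le_of_ge ⟨h1, h2, h4⟩ h3.le)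
  let f : commutator Γ →* S.map (QuotientGroup.mk' B) :=
    ((QuotientGroup.mk' B).comp (commutator Γ).subtype).codRestrict _
      (fun z => ⟨z, hΓS z.2, rfl⟩)
  have := (MonoidHom.isMulCommutative_of_isCyclic_of_ker_le_center f (by
    intro z hz
    have hzB : (z : Γ) ∈ B := by
      rw [← QuotientGroup.eq_one_iff]
      exact congrArg Subtype.val (MonoidHom.mem_ker.1 hz)
    rw [mem_center_iff]
    intro w
    exact Subtype.ext (cyc_comm B w.2 hzB))).is_comm.comm ⟨x, hx⟩ ⟨y, hy⟩
  exact congrArg Subtype.val this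

end QG

namespace QG

open Subgroup
open scoped commutatorElement

lemma HQ.comm_mem {G : Type*} [Group G] [Finite G] (h : HQ G) {p : ℕ} (hp : p.Prime)
    (hdvd : p ∣ Nat.card G) {x y : G} (hx : x ∈ commutator G) (hy : y ∈ commutator G) :
    ⁅x, y⁆ ∈ OO G ((Nat.card G).primeFactors.erase p) := by
  have := Fact.mk hp
  have h5 := h.1 p hp hdvd
  have hco := OO_coprime G ((Nat.card G).primeFactors.erase p)
    (fun q hq => Nat.prime_of_mem_primeFactors (Finset.mem_of_mem_erase hq)) hp
    (Finset.notMem_erase _ _)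
  set K := OO G ((Nat.card G).primeFactors.erase p) with hK
  have hKn : K.Normal := OO_normal _ _
  obtain ⟨P⟩ := (Sylow.nonempty (p := p) (G := G))
  set π := QuotientGroup.mk' K with hπ
  have hπs : Function.Surjective π := QuotientGroup.mk'_surjective K
  have hπ1 : ∀ x, π x = 1 ↔ x ∈ K := fun x => QuotientGroup.eq_one_iff x
  let Sb : Sylow p (G ⧸ K) := P.mapSurjective hπs
  have hFS : ∀ f ∈ Fit G, π f ∈ (Sb : Subgroup (G ⧸ K)) := by
    have : Fit G ≤ (Sb : Subgroup (G ⧸ K)).comap π := by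
      unfold Fit
      rw [OO]
      refine iSup_le fun q => ?_
      by_cases hq : q.1 = p
      · rw [hq]
        intro z hz
        exact ⟨z, Op_le_sylow P hz, rfl⟩
      · intro z hz
        have : z ∈ K := Op_le_OO (Finset.mem_erase.2 ⟨hq, q.2⟩) hz
        rw [mem_comap, (hπ1 z).2 this]
        exact one_mem _
    exact this
  have hcyc := h.quot_cyclic
  have hFc : ∀ a b : G, ⁅a, b⁆ ∈ Fit G := by
    intro a b
    rw [← QuotientGroup.eq_one_iff]
    change QuotientGroup.mk' (Fit G) ⁅a, b⁆ = 1
    rw [map_commutatorElement, commutatorElement_eq_one_iff_mul_comm]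
    obtain ⟨g, hg⟩ := hcyc.exists_generator
    obtain ⟨i, hi⟩ := hg (QuotientGroup.mk' (Fit G) a)
    obtain ⟨j, hj⟩ := hg (QuotientGroup.mk' (Fit G) b)
    simp only at hi hj
    rw [← hi, ← hj, ← zpow_add, ← zpow_add, add_comm]
  have hSn : (Sb : Subgroup (G ⧸ K)).Normal := by
    refine ⟨fun a ha b => ?_⟩
    obtain ⟨g, hg, rfl⟩ := ha
    obtain ⟨s, rfl⟩ := hπs b
    have h1 : (π s) * (π g) * (π s)⁻¹ = π ⁅s, g⁆ * π g := by
      rw [← map_mul, ← map_inv, ← map_mul, ← map_mul, commutatorElement_def]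
      congr 1; group
    rw [h1]
    exact mul_mem (hFS _ (hFc s g)) ⟨g, hg, rfl⟩
  have hqc : QC p (Sb : Subgroup (G ⧸ K)) := by
    have hq1 : QC p P := h.qc hp P P.isPGroup'
    let f : P →* (P : Subgroup G).map π := π.subgroupMap P
    have hf : Function.Bijective f := by
      refine ⟨?_, π.subgroupMap_surjective P⟩
      rw [injective_iff_map_eq_one]
      intro a ha
      have h1 : (a : G) ∈ K := (hπ1 _).1 (congrArg Subtype.val ha)
      obtain ⟨k, hk⟩ := P.isPGroup' a
      have hk' : (a : G) ^ p ^ k = 1 := congrArg Subtype.val hk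
      have h2 : orderOf (a : G) ∣ Nat.card K := by
        have := orderOf_dvd_natCard (⟨a, h1⟩ : K)
        rwa [← Subgroup.orderOf_coe] at this
      have h3 : (a : G) = 1 := by
        have hco' : (Nat.card K).Coprime (p ^ k) := Nat.Coprime.pow_right _ hco
        rw [← orderOf_eq_one_iff, ← Nat.dvd_one, ← hco']
        exact Nat.dvd_gcd h2 (orderOf_dvd_of_pow_eq_one hk')
      exact Subtype.ext h3
    exact hq1.of_injective (MulEquiv.ofBijective f hf).symm.toMonoidHom
      (MulEquiv.ofBijective f hf).symm.injective
  have hidx : (Nat.card ((G ⧸ K) ⧸ (Sb : Subgroup (G ⧸ K)))).Coprime p := by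
    rw [Nat.coprime_comm, Nat.Prime.coprime_iff_not_dvd hp]
    exact Sb.not_dvd_index
  have hc2 : IsCyclic ((G ⧸ K) ⧸ (Sb : Subgroup (G ⧸ K))) := by
    let ψ : G ⧸ Fit G →* (G ⧸ K) ⧸ (Sb : Subgroup (G ⧸ K)) :=
      QuotientGroup.lift (Fit G) ((QuotientGroup.mk' (Sb : Subgroup (G ⧸ K))).comp π)
        (fun f hf => (QuotientGroup.eq_one_iff _).2 (hFS f hf))
    refine isCyclic_of_surjective ψ ?_
    intro z
    obtain ⟨z, rfl⟩ := QuotientGroup.mk'_surjective _ z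
    obtain ⟨z, rfl⟩ := hπs z
    exact ⟨(z : G ⧸ Fit G), rfl⟩
  have hmap : ∀ d ∈ commutator G, π d ∈ commutator (G ⧸ K) := by
    have h4 : (commutator G).map π ≤ commutator (G ⧸ K) := by
      rw [_root_.commutator_def, _root_.commutator_def, map_commutator]
      exact commutator_mono le_top le_top
    exact fun d hd => h4 ⟨d, hd, rfl⟩
  have := lemmaM h5 (Sb : Subgroup (G ⧸ K)) hqc hidx hc2 (hmap x hx) (hmap y hy)
  rw [← hπ1, map_commutatorElement, commutatorElement_eq_one_iff_mul_comm]
  exact this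

lemma HQ.metabelian {G : Type*} [Group G] [Finite G] (h : HQ G) {x y : G}
    (hx : x ∈ commutator G) (hy : y ∈ commutator G) : x * y = y * x := by
  rw [← commutatorElement_eq_one_iff_mul_comm, ← orderOf_eq_one_iff]
  by_contra hne
  obtain ⟨p, hp, hpd⟩ := Nat.exists_prime_and_dvd hne
  have hdvd : p ∣ Nat.card G := hpd.trans (orderOf_dvd_natCard _)
  have h1 := h.comm_mem hp hdvd hx hy
  have hco := OO_coprime G ((Nat.card G).primeFactors.erase p)
    (fun q hq => Nat.prime_of_mem_primeFactors (Finset.mem_of_mem_erase hq)) hp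
    (Finset.notMem_erase _ _)
  have h2 := orderOf_dvd_natCard (⟨_, h1⟩ : OO G ((Nat.card G).primeFactors.erase p))
  rw [← Subgroup.orderOf_coe] at h2
  have h3 := Nat.dvd_gcd (hpd.trans h2) dvd_rfl
  rw [hco] at h3
  exact hp.one_lt.ne' (Nat.dvd_one.1 h3)

lemma HQ_of {G : Type*} [Group G] [Finite G]
    (h : ∀ m : ℕ, m ∣ Monoid.exponent G → Nat.card {x : G // x ^ m = 1} ≤ m ^ 2)
    (hcop : Nat.gcd (Nat.card G) 6 = 1) : HQ G := by
  constructor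
  · intro p hp hd
    by_contra hlt
    push Not at hlt
    have h2 := hp.two_le
    have h6 : p ∣ 6 := by
      interval_cases p
      · norm_num
      · norm_num
      · exact absurd hp (by norm_num)
    have := Nat.dvd_gcd hd h6
    rw [hcop] at this
    exact hp.one_lt.ne' (Nat.dvd_one.1 this)
  · intro p hp k
    have h1 := h (Nat.gcd (p ^ k) (Monoid.exponent G)) (Nat.gcd_dvd_right _ _)
    have h2 : ∀ x : G, x ^ (p ^ k) = 1 ↔ x ^ (Nat.gcd (p ^ k) (Monoid.exponent G)) = 1 := by
      intro x
      rw [← orderOf_dvd_iff_pow_eq_one, ← orderOf_dvd_iff_pow_eq_one, Nat.dvd_gcd_iff]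
      exact ⟨fun h => ⟨h, Monoid.order_dvd_exponent x⟩, fun h => h.1⟩
    rw [Nat.card_congr (Equiv.subtypeEquivRight h2)]
    refine h1.trans ?_
    rw [mul_comm, pow_mul]
    exact Nat.pow_le_pow_left (Nat.gcd_le_left _ (pow_pos hp.pos k)) 2

end QG

theorem Q_group_coprime_six_metabelian (G : Type*) [Group G] [Finite G]
    (h : ∀ m : ℕ, m ∣ Monoid.exponent G → Nat.card {x : G // x ^ m = 1} ≤ m ^ 2)
    (hcop : Nat.gcd (Nat.card G) 6 = 1) :
    (∀ x y : ↥(commutator G), x * y = y * x) ∧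
    -- the Fitting subgroup `F` : the largest nilpotent normal subgroup of `G`
    ∃ F : Subgroup G, ∃ hF : F.Normal, Group.IsNilpotent ↥F ∧
      (∀ H : Subgroup G, H.Normal → Group.IsNilpotent ↥H → H ≤ F) ∧
      (letI := hF; IsCyclic (G ⧸ F)) := by
  have hQ := QG.HQ_of h hcop
  refine ⟨fun x y => Subtype.ext (hQ.metabelian x.2 y.2), QG.Fit G, QG.Fit_normal G,
    QG.Fit_nilpotent G, fun H hn hH => QG.le_Fit H hn hH, hQ.quot_cyclic⟩
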